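/- Let y ∈ ℂ with Re(y) > 0. Then y Σ_{n=1}^∞ (γ + log(ny))/(e^{ny} − 1) − (1/4) y log(y) + y((1/4)log(2π) − γ/4) + (1/2)log²(y) − γ²/2 − π²/12 = Σ_{n=1}^∞ { ψ₁(2πin/y) + ψ₁(−2πin/y) − (1/2)(log²(2πin/y) + log²(−2πin/y)) + y/(4n) }, where the series on the right converges. -/

import Mathlib

open Filter Topology MeasureTheory

noncomputable def eulerGamma : ℝ := Real.eulerMascheroniConstant

noncomputable def gamma1 : ℝ :=
  limUnder atTop (fun n : ℕ => ∑ j ∈ Finset.Icc 1 n, Real.log j / j - (Real.log n) ^ 2 / 2)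

noncomputable def psi1 (z : ℂ) : ℂ :=
  -(gamma1 : ℂ) - Complex.log z / z -
    ∑' n : ℕ, (Complex.log (((n : ℂ) + 1) + z) / (((n : ℂ) + 1) + z)
      - Complex.log ((n : ℂ) + 1) / ((n : ℂ) + 1))

noncomputable def psiTerm (y : ℂ) (n : ℕ) : ℂ :=
  psi1 (2 * (Real.pi : ℂ) * Complex.I * ((n : ℂ) + 1) / y)
    + psi1 (-(2 * (Real.pi : ℂ) * Complex.I * ((n : ℂ) + 1) / y))
    - (1/2) * ((Complex.log (2 * (Real.pi : ℂ) * Complex.I * ((n : ℂ) + 1) / y)) ^ 2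
      + (Complex.log (-(2 * (Real.pi : ℂ) * Complex.I * ((n : ℂ) + 1) / y))) ^ 2)
    + y / (4 * ((n : ℂ) + 1))

/-!
Each of `ψ₁(z)` and `½ log² z` is a limit of an Euler–Maclaurin expression in
`x ↦ log (x + z) / (x + z)`, and for a pair of opposite points `±2πin/y` everything except the
remainder integrals `∫ K(s) κ(s ± 2πin/y) ds` cancels, where `κ` is the second derivative of
`log z / z` up to sign and `K` is the second Euler–Maclaurin kernel. Summing over `n ≠ 0` under
the integral, Poisson summation turns `∑ₙ κ(s + 2πin/y)`, taken over all integers, into the second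
derivative of the exponential series `y ∑ₘ (γ + log (m y)) exp (-m y s)`. The right-hand side is
therefore the Euler–Maclaurin remainder of the function
`u(s) = log s / s + y ∑ₘ (γ + log (m y)) exp (-m y s)`, whose sum over the positive integers is
the Lambert series and whose singular parts at `s = 0` cancel. The remaining terms are the values
at `0` of `u` and of its primitive, computed from the generating functions of the harmonic
numbers, Stirling's formula and `ζ(2) = π²/6`.
-/

section EulerMaclaurin

/-- The kernel `{s}(1 - {s})/2` of the second-order Euler–Maclaurin formula, where `{s}` is the
fractional part. -/
noncomputable def emKernel (s : ℝ) : ℝ := Int.fract s * (1 - Int.fract s) / 2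

lemma emKernel_of_mem_Ico {k : ℕ} {s : ℝ} (hs : s ∈ Set.Ico (k : ℝ) (k + 1)) :
    emKernel s = (s - k) * (k + 1 - s) / 2 := by
  have hfract : Int.fract s = s - k :=
    Int.fract_eq_iff.2 ⟨by linarith [hs.1], by linarith [hs.2], k, by simp⟩
  rw [emKernel, hfract]
  ring

lemma norm_emKernel_le_one (s : ℝ) : ‖emKernel s‖ ≤ 1 := by
  have h₀ := Int.fract_nonneg s
  have h₁ := (Int.fract_lt_one s).le
  rw [emKernel, Real.norm_of_nonneg (by nlinarith)]
  nlinarith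

lemma measurable_emKernel : Measurable emKernel := by
  have := measurable_fract (R := ℝ)
  unfold emKernel
  fun_prop

variable {E : Type*} [NormedAddCommGroup E] [NormedSpace ℝ E]

lemma integrableOn_emKernel_smul {f : ℝ → E} {s : Set ℝ} (hf : IntegrableOn f s) :
    IntegrableOn (fun x ↦ emKernel x • f x) s :=
  hf.bdd_smul 1 measurable_emKernel.aestronglyMeasurable (.of_forall norm_emKernel_le_one)

variable {F f f' f'' : ℝ → E}

lemma hasDerivAt_emKernel_smul_primitive {k : ℕ} {x : ℝ} (hx : x ∈ Set.Ioo (k : ℝ) (k + 1))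
    (hF : HasDerivAt F (f x) x) (hf : HasDerivAt f (f' x) x) (hf' : HasDerivAt f' (f'' x) x) :
    HasDerivAt (fun x : ℝ ↦ ((x - k) * (k + 1 - x) / 2) • f' x - (k + 1 / 2 - x) • f x - F x)
      (emKernel x • f'' x) x := by
  have hq : HasDerivAt (fun x : ℝ ↦ (x - k) * (k + 1 - x) / 2) (k + 1 / 2 - x) x := by
    refine ((((hasDerivAt_id x).sub_const (k : ℝ)).mul
      ((hasDerivAt_id x).const_sub (k + 1 : ℝ))).div_const 2).congr_deriv ?_
    simp only [id]
    ring
  have hl : HasDerivAt (fun x : ℝ ↦ k + 1 / 2 - x) (-1) x :=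
    (hasDerivAt_id x).const_sub (k + 1 / 2 : ℝ)
  refine (((hq.smul hf').sub (hl.smul hf)).sub hF).congr_deriv ?_
  rw [emKernel_of_mem_Ico ⟨hx.1.le, hx.2⟩]
  module

variable [CompleteSpace E]

lemma integral_emKernel_smul_unit {k : ℕ} {Fa Fb fa fb : E}
    (hF : ∀ x ∈ Set.Ioo (k : ℝ) (k + 1), HasDerivAt F (f x) x)
    (hf : ∀ x ∈ Set.Ioo (k : ℝ) (k + 1), HasDerivAt f (f' x) x)
    (hf' : ∀ x ∈ Set.Ioo (k : ℝ) (k + 1), HasDerivAt f' (f'' x) x)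
    (hFa : Tendsto F (𝓝[>] (k : ℝ)) (𝓝 Fa)) (hFb : Tendsto F (𝓝[<] (k + 1 : ℝ)) (𝓝 Fb))
    (hfa : Tendsto f (𝓝[>] (k : ℝ)) (𝓝 fa)) (hfb : Tendsto f (𝓝[<] (k + 1 : ℝ)) (𝓝 fb))
    (hf'a : Tendsto (fun x : ℝ ↦ (x - k) • f' x) (𝓝[>] (k : ℝ)) (𝓝 0))
    (hf'b : Tendsto (fun x : ℝ ↦ (k + 1 - x) • f' x) (𝓝[<] (k + 1 : ℝ)) (𝓝 0))
    (hint : IntervalIntegrable (fun x ↦ emKernel x • f'' x) volume k (k + 1)) :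
    ∫ x in (k : ℝ)..(k + 1), emKernel x • f'' x = (2⁻¹ : ℝ) • (fa + fb) - (Fb - Fa) := by
  have hid (s : Set ℝ) (a : ℝ) : Tendsto (fun x : ℝ ↦ x) (𝓝[s] a) (𝓝 a) := nhdsWithin_le_nhds
  rw [intervalIntegral.integral_eq_sub_of_hasDerivAt_of_tendsto (by simp)
    (fa := -(2⁻¹ : ℝ) • fa - Fa) (fb := (2⁻¹ : ℝ) • fb - Fb)
    (fun x hx ↦ hasDerivAt_emKernel_smul_primitive hx (hF x hx) (hf x hx) (hf' x hx)) hint ?_ ?_]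
  · module
  · have h₁ := (((hid (.Ioi (k : ℝ)) k).const_sub (k + 1 : ℝ)).div_const 2).smul hf'a
    have h₂ := ((hid (.Ioi (k : ℝ)) k).const_sub (k + 1 / 2 : ℝ)).smul hfa
    convert! (h₁.sub h₂).sub hFa using 2
    · rw [smul_smul]
      congr 3
      ring
    · module
  · have h₁ := (((hid (.Iio (k + 1 : ℝ)) (k + 1)).sub_const (k : ℝ)).div_const 2).smul hf'b
    have h₂ := ((hid (.Iio (k + 1 : ℝ)) (k + 1)).const_sub (k + 1 / 2 : ℝ)).smul hfb
    convert! (h₁.sub h₂).sub hFb using 2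
    · rw [smul_smul]
      congr 3
      ring
    · module

variable {F₀ f₀ : E}
  (hF : ∀ x, 0 < x → HasDerivAt F (f x) x) (hf : ∀ x, 0 < x → HasDerivAt f (f' x) x)
  (hf' : ∀ x, 0 < x → HasDerivAt f' (f'' x) x)
  (hF₀ : Tendsto F (𝓝[>] 0) (𝓝 F₀)) (hf₀ : Tendsto f (𝓝[>] 0) (𝓝 f₀))
  (hf'₀ : Tendsto (fun x ↦ x • f' x) (𝓝[>] 0) (𝓝 0))
  (hint : IntegrableOn (fun x ↦ emKernel x • f'' x) (Set.Ioi 0))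
include hF hf hf' hF₀ hf₀ hf'₀ hint

lemma integral_emKernel_smul (N : ℕ) :
    ∫ x in (0 : ℝ)..(N + 1), emKernel x • f'' x =
      (2⁻¹ : ℝ) • (f₀ + f (N + 1)) + ∑ k ∈ Finset.range N, f (k + 1) - (F (N + 1) - F₀) := by
  have hint' {a b : ℝ} (ha : 0 ≤ a) (hb : 0 ≤ b) :
      IntervalIntegrable (fun x ↦ emKernel x • f'' x) volume a b :=
    ⟨hint.mono_set fun x hx ↦ ha.trans_lt hx.1, hint.mono_set fun x hx ↦ hb.trans_lt hx.1⟩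
  have hleft {g : ℝ → E} {a : ℝ} (hg : ContinuousAt g a) : Tendsto g (𝓝[<] a) (𝓝 (g a)) :=
    hg.continuousWithinAt
  have hsmul {c : ℝ → ℝ} {g : ℝ → E} {a : ℝ} (s : Set ℝ) (hg : ContinuousAt g a)
      (hc : Continuous c) (hca : c a = 0) : Tendsto (fun x ↦ c x • g x) (𝓝[s] a) (𝓝 0) := by
    have h : ContinuousAt (fun x ↦ c x • g x) a := hc.continuousAt.smul hg
    simpa [ContinuousAt, hca] using h.tendsto.mono_left (nhdsWithin_le_nhds (s := s))
  induction N with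
  | zero =>
    have h := integral_emKernel_smul_unit (k := 0) (fun x hx ↦ hF x (by simpa using hx.1))
      (fun x hx ↦ hf x (by simpa using hx.1)) (fun x hx ↦ hf' x (by simpa using hx.1))
      (by simpa using hF₀) (hleft (hF _ (by simp)).continuousAt) (by simpa using hf₀)
      (hleft (hf _ (by simp)).continuousAt) (by simpa using hf'₀)
      (hsmul _ (hf' _ (by simp)).continuousAt (by fun_prop) (by simp)) (hint' (by simp) (by simp))
    simpa using h
  | succ N ih =>
    have hN : (0 : ℝ) < (N + 1 : ℕ) := by positivity
    have hN' : (0 : ℝ) < (N + 1 : ℕ) + 1 := by positivity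
    have h := integral_emKernel_smul_unit (k := N + 1) (fun x hx ↦ hF x (hN.trans hx.1))
      (fun x hx ↦ hf x (hN.trans hx.1)) (fun x hx ↦ hf' x (hN.trans hx.1))
      (hF _ hN).continuousAt.continuousWithinAt (hleft (hF _ hN').continuousAt)
      (hf _ hN).continuousAt.continuousWithinAt (hleft (hf _ hN').continuousAt)
      (hsmul _ (hf' _ hN).continuousAt (by fun_prop) (by simp))
      (hsmul _ (hf' _ hN').continuousAt (by fun_prop) (by simp)) (hint' hN.le hN'.le)
    push_cast at h ⊢
    rw [← intervalIntegral.integral_add_adjacent_intervals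
      (hint' le_rfl (b := N + 1) (by positivity)) (hint' (by positivity) (by positivity)), ih, h,
      Finset.sum_range_succ]
    module

/-- Since `F` need not converge at infinity, the formula is phrased as the limit of the difference
of sum and primitive. -/
lemma tendsto_sum_sub_primitive (hlim : Tendsto (fun N : ℕ ↦ f N) atTop (𝓝 0)) :
    Tendsto (fun N : ℕ ↦ ∑ k ∈ Finset.range N, f (k + 1) - F N) atTop
      (𝓝 ((∫ x in Set.Ioi (0 : ℝ), emKernel x • f'' x) - (2⁻¹ : ℝ) • f₀ - F₀)) := by
  rw [← tendsto_add_atTop_iff_nat 1]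
  have hN : Tendsto (fun N : ℕ ↦ (N + 1 : ℝ)) atTop atTop :=
    tendsto_natCast_atTop_atTop.atTop_add tendsto_const_nhds
  have hlim' : Tendsto (fun N : ℕ ↦ f (N + 1)) atTop (𝓝 0) := by
    exact_mod_cast hlim.comp (tendsto_add_atTop_nat 1)
  have h := ((intervalIntegral_tendsto_integral_Ioi 0 hint hN).sub_const ((2⁻¹ : ℝ) • f₀ + F₀)).add
    (hlim'.const_smul (2⁻¹ : ℝ))
  simp only [integral_emKernel_smul hF hf hf' hF₀ hf₀ hf'₀ hint] at h
  convert! h using 2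
  · rw [Finset.sum_range_succ]
    push_cast
    module
  · module

end EulerMaclaurin

section Laplace

lemma norm_exp_neg_mul_ofReal (p : ℂ) (x : ℝ) :
    ‖Complex.exp (-(p * x))‖ = Real.exp (-(p.re * x)) := by
  simp [Complex.norm_exp]

lemma norm_exp_neg_mul_mul_le {b x : ℝ} {q : ℂ} (hb : 0 < b) (hq : 2 * b ≤ q.re) (hx : 0 ≤ x) :
    ‖Complex.exp (-(q * x)) * x‖ ≤ ‖Complex.exp (-(b * x))‖ * b⁻¹ := by
  have hx' : x ≤ b⁻¹ * Real.exp (b * x) := by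
    rw [← div_eq_inv_mul, le_div_iff₀ hb, mul_comm]
    linarith [Real.add_one_le_exp (b * x)]
  rw [norm_mul, norm_exp_neg_mul_ofReal, norm_exp_neg_mul_ofReal, Complex.norm_real,
    Real.norm_of_nonneg hx, Complex.ofReal_re]
  calc Real.exp (-(q.re * x)) * x
      ≤ Real.exp (-(2 * b * x)) * (b⁻¹ * Real.exp (b * x)) := by gcongr
    _ = Real.exp (-(b * x)) * b⁻¹ := by
      rw [mul_left_comm, ← Real.exp_add, mul_comm]
      ring_nf

lemma differentiableOn_laplace {h : ℝ → ℂ}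
    (hh : ∀ b : ℝ, 0 < b →
      IntegrableOn (fun x : ℝ ↦ h x * Complex.exp (-(b * x))) (Set.Ioi 0)) :
    DifferentiableOn ℂ (fun p : ℂ ↦ ∫ x in Set.Ioi (0 : ℝ), h x * Complex.exp (-(p * x)))
      {p | 0 < p.re} := by
  intro p (hp : 0 < p.re)
  have hexp (q : ℂ) : Continuous fun x : ℝ ↦ Complex.exp (q * x) := by fun_prop
  have hb : 0 < p.re / 4 := by positivity
  have hmeas (q : ℂ) : AEStronglyMeasurable (fun x : ℝ ↦ h x * Complex.exp (-(q * x)))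
      (volume.restrict (Set.Ioi 0)) := by
    refine ((hh _ hb).aestronglyMeasurable.mul
      (hexp ((p.re / 4 : ℝ) - q)).aestronglyMeasurable).congr (.of_forall fun x ↦ ?_)
    simp only [Pi.mul_apply, mul_assoc, ← Complex.exp_add]
    ring_nf
  have hdom {q : ℂ} (hq : p.re / 2 < q.re) {x : ℝ} (hx : 0 < x) :
      ‖h x * (Complex.exp (-(q * x)) * -x)‖
        ≤ ‖h x * Complex.exp (-((p.re / 4 : ℝ) * x))‖ * (p.re / 4)⁻¹ := by
    rw [norm_mul, norm_mul (h x), mul_neg, norm_neg, mul_assoc]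
    gcongr
    exact norm_exp_neg_mul_mul_le hb (by linarith) hx.le
  have hs : {q : ℂ | p.re / 2 < q.re} ∈ 𝓝 p :=
    (isOpen_lt continuous_const Complex.continuous_re).mem_nhds (half_lt_self hp)
  refine (hasDerivAt_integral_of_dominated_loc_of_deriv_le hs (.of_forall hmeas) ?_
    (F' := fun q x ↦ h x * (Complex.exp (-(q * x)) * -x)) ?_
    ((ae_restrict_iff' measurableSet_Ioi).2 (.of_forall fun x hx q hq ↦ hdom hq hx))
    ((hh _ hb).norm.mul_const _)
    (.of_forall fun x q _ ↦ ?_)).2.differentiableAt.differentiableWithinAt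
  · refine (hh _ hb).norm.mono' (hmeas p) ((ae_restrict_iff' measurableSet_Ioi).2
      (.of_forall fun x (hx : 0 < x) ↦ ?_))
    rw [norm_mul, norm_mul, norm_exp_neg_mul_ofReal, norm_exp_neg_mul_ofReal, Complex.ofReal_re]
    gcongr
    linarith
  · refine ((hmeas p).mul Complex.continuous_ofReal.neg.aestronglyMeasurable).congr
      (.of_forall fun x ↦ ?_)
    simp [mul_assoc]
  · refine ((((hasDerivAt_id q).mul_const (x : ℂ)).neg.cexp).const_mul (h x)).congr_deriv ?_
    simp

lemma isBigO_exp_neg_mul_atTop {p : ℂ} (hp : 0 < p.re) (a : ℝ) :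
    (fun x : ℝ ↦ Complex.exp (-(p * x))) =O[atTop] (· ^ (-a)) := by
  refine .of_norm_left ((isLittleO_exp_neg_mul_rpow_atTop hp (-a)).isBigO.congr_left fun x ↦ ?_)
  rw [norm_exp_neg_mul_ofReal, neg_mul]

lemma isBigO_exp_neg_mul_nhdsGT_zero (p : ℂ) :
    (fun x : ℝ ↦ Complex.exp (-(p * x))) =O[𝓝[>] 0] (· ^ (-0 : ℝ)) := by
  have h : Continuous fun x : ℝ ↦ Complex.exp (-(p * x)) := by fun_prop
  simpa using (h.tendsto 0).isBigO_one ℝ |>.mono nhdsWithin_le_nhds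

lemma locallyIntegrableOn_exp_neg_mul (p : ℂ) (s : Set ℝ) :
    LocallyIntegrableOn (fun x : ℝ ↦ Complex.exp (-(p * x))) s :=
  (Continuous.locallyIntegrable (by fun_prop)).locallyIntegrableOn _

lemma mellinConvergent_exp_neg_mul {a p : ℂ} (ha : 0 < a.re) (hp : 0 < p.re) :
    MellinConvergent (fun x : ℝ ↦ Complex.exp (-(p * x))) a :=
  mellinConvergent_of_isBigO_rpow (locallyIntegrableOn_exp_neg_mul p _)
    (isBigO_exp_neg_mul_atTop hp _) (lt_add_one _) (isBigO_exp_neg_mul_nhdsGT_zero p) ha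

lemma integral_cpow_mul_exp_neg_mul_of_re_pos {a p : ℂ} (ha : 0 < a.re) (hp : 0 < p.re) :
    ∫ t in Set.Ioi (0 : ℝ), (t : ℂ) ^ (a - 1) * Complex.exp (-(p * t)) =
      p ^ (-a) * Complex.Gamma a := by
  have hreal {r : ℝ} (hr : 0 < r) :
      ∫ t in Set.Ioi (0 : ℝ), (t : ℂ) ^ (a - 1) * Complex.exp (-(r * t)) =
        (r : ℂ) ^ (-a) * Complex.Gamma a := by
    rw [Complex.integral_cpow_mul_exp_neg_mul_Ioi ha hr, one_div, Complex.cpow_neg,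
      Complex.inv_cpow]
    simp [Complex.arg_ofReal_of_nonneg hr.le, Real.pi_ne_zero.symm]
  have hopen : IsOpen {w : ℂ | 0 < w.re} := isOpen_lt continuous_const Complex.continuous_re
  have hrhs : DifferentiableOn ℂ (fun p : ℂ ↦ p ^ (-a) * Complex.Gamma a) {p | 0 < p.re} :=
    fun q hq ↦ ((differentiableAt_id.cpow_const (Or.inl hq)).mul_const _).differentiableWithinAt
  have hfreq : Tendsto (fun r : ℝ ↦ (r : ℂ)) (𝓝[>] 1) (𝓝[≠] 1) :=
    tendsto_nhdsWithin_iff.2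
      ⟨(Complex.continuous_ofReal.tendsto' 1 1 (by simp)).mono_left nhdsWithin_le_nhds, by
        filter_upwards [self_mem_nhdsWithin] with r (hr : 1 < r)
        simpa using hr.ne'⟩
  refine ((differentiableOn_laplace fun b hb ↦ ?_).analyticOnNhd
    hopen).eqOn_of_preconnected_of_frequently_eq
    (hrhs.analyticOnNhd hopen) (convex_halfSpace_re_gt 0).isPreconnected (z₀ := 1) (by simp)
    (hfreq.frequently (Eventually.frequently ?_)) hp
  · exact mellinConvergent_exp_neg_mul ha (p := b) hb
  filter_upwards [self_mem_nhdsWithin] with r (hr : 1 < r)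
  exact hreal (one_pos.trans hr)

lemma cpow_neg_three (p : ℂ) : p ^ (-3 : ℂ) = (p ^ 3)⁻¹ := by
  rw [Complex.cpow_neg, ← Nat.cast_ofNat, Complex.cpow_natCast]

lemma hasDerivAt_cpow_neg_mul_Gamma_three {p : ℂ} (hp : p ≠ 0) :
    HasDerivAt (fun a ↦ p ^ (-a) * Complex.Gamma a)
      ((3 - 2 * eulerGamma - 2 * Complex.log p) / p ^ 3) 3 := by
  have hharm : ((harmonic 2 : ℚ) : ℂ) = 3 / 2 := by
    norm_num [harmonic, Finset.sum_range_succ]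
  have hGamma := Complex.hasDerivAt_Gamma_nat 2
  rw [hharm, Nat.cast_ofNat, two_add_one_eq_three] at hGamma
  refine ((hasDerivAt_neg (3 : ℂ)).const_cpow (.inl hp) |>.mul hGamma).congr_deriv ?_
  rw [cpow_neg_three, (by simp : Complex.Gamma 3 = 2), eulerGamma]
  simp only [Nat.factorial]
  push_cast
  ring

lemma integral_sq_mul_const_add_log_mul_exp_neg_mul (c : ℂ) {p : ℂ} (hp : 0 < p.re) :
    ∫ x in Set.Ioi (0 : ℝ), (x : ℂ) ^ 2 * (c + Real.log x) * Complex.exp (-(p * x)) =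
      (3 - 2 * eulerGamma + 2 * c - 2 * Complex.log p) / p ^ 3 := by
  have hsq (t : ℝ) : (t : ℂ) ^ (3 - 1 : ℂ) = (t : ℂ) ^ 2 := by
    rw [show (3 - 1 : ℂ) = (2 : ℕ) by norm_num, Complex.cpow_natCast]
  have hp₀ : p ≠ 0 := Complex.ne_zero_of_re_pos hp
  obtain ⟨hlogint, hlog⟩ := mellin_hasDerivAt_of_isBigO_rpow (s := 3)
    (locallyIntegrableOn_exp_neg_mul p _) (isBigO_exp_neg_mul_atTop hp 4) (by norm_num)
    (isBigO_exp_neg_mul_nhdsGT_zero p) (by norm_num)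
  have hconst : MellinConvergent (fun x : ℝ ↦ Complex.exp (-(p * x))) 3 :=
    mellinConvergent_exp_neg_mul (by norm_num) hp
  have hmellin : mellin (fun x : ℝ ↦ Complex.exp (-(p * x))) =ᶠ[𝓝 3]
      fun a ↦ p ^ (-a) * Complex.Gamma a := by
    filter_upwards [(isOpen_lt continuous_const Complex.continuous_re).mem_nhds
      (show (0 : ℝ) < (3 : ℂ).re by norm_num)] with a ha
    exact integral_cpow_mul_exp_neg_mul_of_re_pos ha hp
  have hval₀ := hmellin.self_of_nhds
  beta_reduce at hval₀
  rw [cpow_neg_three, (by simp : Complex.Gamma 3 = 2)] at hval₀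
  have hval₁ := hlog.unique
    ((hasDerivAt_cpow_neg_mul_Gamma_three hp₀).congr_of_eventuallyEq hmellin)
  simp only [mellin, MellinConvergent, hsq, smul_eq_mul, Complex.real_smul]
    at hval₀ hval₁ hlogint hconst
  calc ∫ x in Set.Ioi (0 : ℝ), (x : ℂ) ^ 2 * (c + Real.log x) * Complex.exp (-(p * x))
      = ∫ x in Set.Ioi (0 : ℝ), (c * ((x : ℂ) ^ 2 * Complex.exp (-(p * x)))
          + (x : ℂ) ^ 2 * (Real.log x * Complex.exp (-(p * x)))) := by
        congr with x
        ring
    _ = c * ((p ^ 3)⁻¹ * 2) + (3 - 2 * eulerGamma - 2 * Complex.log p) / p ^ 3 := by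
        rw [integral_add (hconst.const_mul c) hlogint, integral_const_mul, hval₀, hval₁]
    _ = (3 - 2 * eulerGamma + 2 * c - 2 * Complex.log p) / p ^ 3 := by ring

end Laplace

section LogDiv

/-- The function `log z / z`, whose values at the points `z + n` define `psi1`. -/
noncomputable def logDiv (z : ℂ) : ℂ := Complex.log z / z

/-- The derivative of `logDiv`. -/
noncomputable def logDivDeriv (z : ℂ) : ℂ := (1 - Complex.log z) / z ^ 2

/-- Minus the second derivative of `logDiv`. The sign is the one that makes this function a Laplace
transform with kernel `x ^ 2 * (γ + log x)`. -/
noncomputable def logDivKernel (z : ℂ) : ℂ := (3 - 2 * Complex.log z) / z ^ 3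

variable {z : ℂ}

lemma hasDerivAt_half_log_sq (hz : z ∈ Complex.slitPlane) :
    HasDerivAt (fun z ↦ Complex.log z ^ 2 / 2) (logDiv z) z := by
  refine (((Complex.hasDerivAt_log hz).pow 2).div_const 2).congr_deriv ?_
  rw [logDiv]
  ring

lemma hasDerivAt_logDiv (hz : z ∈ Complex.slitPlane) :
    HasDerivAt logDiv (logDivDeriv z) z := by
  have hz₀ := Complex.slitPlane_ne_zero hz
  refine ((Complex.hasDerivAt_log hz).div (hasDerivAt_id z) hz₀).congr_deriv ?_
  simp [logDivDeriv, hz₀]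

lemma hasDerivAt_logDivDeriv (hz : z ∈ Complex.slitPlane) :
    HasDerivAt logDivDeriv (-logDivKernel z) z := by
  have hz₀ := Complex.slitPlane_ne_zero hz
  refine (((Complex.hasDerivAt_log hz).const_sub 1).div (hasDerivAt_pow 2 z)
    (pow_ne_zero 2 hz₀)).congr_deriv ?_
  rw [logDivKernel]
  field_simp
  ring

lemma continuousOn_logDivKernel : ContinuousOn logDivKernel Complex.slitPlane := by
  intro z hz
  have hlog := continuousAt_clog hz
  have hz₀ := Complex.slitPlane_ne_zero hz
  unfold logDivKernel
  exact ContinuousAt.continuousWithinAt (by fun_prop (disch := simpa))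

lemma norm_log_le_abs_log_norm_add_pi (z : ℂ) :
    ‖Complex.log z‖ ≤ |Real.log ‖z‖| + Real.pi := by
  refine (Complex.norm_le_abs_re_add_abs_im _).trans ?_
  rw [Complex.log_re, Complex.log_im]
  gcongr
  exact Complex.abs_arg_le_pi z

lemma exists_norm_log_le_mul_rpow {c : ℝ} (hc : 0 < c) :
    ∃ A : ℝ, 0 < A ∧ ∀ z : ℂ, c ≤ ‖z‖ →
      3 + 2 * ‖Complex.log z‖ ≤ A * ‖z‖ ^ (1 / 2 : ℝ) := by
  refine ⟨(3 + 2 * (|Real.log c| + Real.pi)) * c ^ (-(1 / 2) : ℝ) + 4, by positivity,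
    fun z hz ↦ ?_⟩
  have hz₀ : 0 < ‖z‖ := hc.trans_le hz
  have hnorm := norm_log_le_abs_log_norm_add_pi z
  have hlog : |Real.log ‖z‖| ≤ 2 * ‖z‖ ^ (1 / 2 : ℝ) + |Real.log c| := by
    have hupper := Real.log_le_rpow_div hz₀.le (show (0 : ℝ) < 1 / 2 by norm_num)
    have hlower := Real.log_le_log hc hz
    have hpos : 0 ≤ ‖z‖ ^ (1 / 2 : ℝ) := by positivity
    exact abs_le.2 ⟨by linarith [neg_abs_le (Real.log c)], by linarith [abs_nonneg (Real.log c)]⟩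
  have hone : 1 ≤ c ^ (-(1 / 2) : ℝ) * ‖z‖ ^ (1 / 2 : ℝ) := by
    rw [Real.rpow_neg hc.le, inv_mul_eq_div, one_le_div (by positivity)]
    gcongr
  have hconst := mul_le_mul_of_nonneg_left hone
    (show 0 ≤ 3 + 2 * (|Real.log c| + Real.pi) by positivity)
  linarith

lemma exists_norm_div_pow_le_mul_rpow {c : ℝ} (hc : 0 < c) :
    ∃ A : ℝ, 0 < A ∧ ∀ w z : ℂ, c ≤ ‖z‖ → ‖w‖ ≤ 3 + 2 * ‖Complex.log z‖ →
      ∀ k : ℕ, ‖w / z ^ k‖ ≤ A * ‖z‖ ^ (1 / 2 - k : ℝ) := by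
  obtain ⟨A, hA, hlog⟩ := exists_norm_log_le_mul_rpow hc
  refine ⟨A, hA, fun w z hz hw k ↦ ?_⟩
  have hz₀ : 0 < ‖z‖ := hc.trans_le hz
  rw [norm_div, norm_pow, Real.rpow_sub hz₀, Real.rpow_natCast, ← mul_div_assoc]
  gcongr
  exact hw.trans (hlog z hz)

lemma exists_norm_logDiv_le {c : ℝ} (hc : 0 < c) :
    ∃ A : ℝ, 0 < A ∧ ∀ z : ℂ, c ≤ ‖z‖ → ‖logDiv z‖ ≤ A * ‖z‖ ^ (-(1 / 2) : ℝ) := by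
  obtain ⟨A, hA, h⟩ := exists_norm_div_pow_le_mul_rpow hc
  refine ⟨A, hA, fun z hz ↦ ?_⟩
  have hw : ‖Complex.log z‖ ≤ 3 + 2 * ‖Complex.log z‖ := by linarith [norm_nonneg (Complex.log z)]
  have hdiv := h _ z hz hw 1
  rw [pow_one] at hdiv
  exact hdiv.trans_eq (by norm_num)

lemma exists_norm_logDivDeriv_le {c : ℝ} (hc : 0 < c) :
    ∃ A : ℝ, 0 < A ∧ ∀ z : ℂ, c ≤ ‖z‖ → ‖logDivDeriv z‖ ≤ A * ‖z‖ ^ (-(3 / 2) : ℝ) := by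
  obtain ⟨A, hA, h⟩ := exists_norm_div_pow_le_mul_rpow hc
  refine ⟨A, hA, fun z hz ↦ ?_⟩
  have hw : ‖1 - Complex.log z‖ ≤ 3 + 2 * ‖Complex.log z‖ := by
    refine (norm_sub_le _ _).trans ?_
    linarith [norm_nonneg (Complex.log z), norm_one (α := ℂ)]
  exact (h _ z hz hw 2).trans_eq (by norm_num)

lemma exists_norm_logDivKernel_le {c : ℝ} (hc : 0 < c) :
    ∃ A : ℝ, 0 < A ∧ ∀ z : ℂ, c ≤ ‖z‖ → ‖logDivKernel z‖ ≤ A * ‖z‖ ^ (-(5 / 2) : ℝ) := by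
  obtain ⟨A, hA, h⟩ := exists_norm_div_pow_le_mul_rpow hc
  refine ⟨A, hA, fun z hz ↦ ?_⟩
  have hw : ‖3 - 2 * Complex.log z‖ ≤ 3 + 2 * ‖Complex.log z‖ :=
    (norm_sub_le _ _).trans (by simp)
  exact (h _ z hz hw 3).trans_eq (by norm_num)

end LogDiv

section Binet

lemma add_ofReal_mem_slitPlane {z : ℂ} (hz : z ∈ Complex.slitPlane) {s : ℝ} (hs : 0 ≤ s) :
    z + s ∈ Complex.slitPlane := by
  rw [Complex.mem_slitPlane_iff] at hz ⊢
  rcases hz with hre | him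
  · exact .inl (by simpa using add_pos_of_pos_of_nonneg hre hs)
  · exact .inr (by simpa using him)

lemma isBigO_translate_sub {f f' : ℂ → ℂ} {A a : ℝ} (ha : a ≤ 0)
    (hf : ∀ w ∈ Complex.slitPlane, HasDerivAt f (f' w) w)
    (hf' : ∀ w : ℂ, 1 ≤ ‖w‖ → ‖f' w‖ ≤ A * ‖w‖ ^ a) (z : ℂ) :
    (fun n : ℕ ↦ f (z + n) - f n) =O[atTop] fun n : ℕ ↦ (n : ℝ) ^ a := by
  refine .of_bound (A * (1 / 2) ^ a * ‖z‖) ?_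
  have hlarge : ∀ᶠ n : ℕ in atTop, 2 * (‖z‖ + 1) ≤ n :=
    tendsto_natCast_atTop_atTop.eventually_ge_atTop _
  filter_upwards [hlarge] with n hn
  have hA : 0 ≤ A := by simpa using (norm_nonneg _).trans (hf' 1 (by simp))
  have hball : ∀ w ∈ Metric.closedBall (n : ℂ) ‖z‖, w ∈ Complex.slitPlane ∧ (n : ℝ) / 2 ≤ ‖w‖ := by
    intro w hw
    rw [Metric.mem_closedBall, Complex.dist_eq] at hw
    have hre := (Complex.abs_re_le_norm (w - n)).trans hw
    rw [Complex.sub_re, Complex.natCast_re, abs_le] at hre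
    exact ⟨.inl (by linarith [norm_nonneg z]), by linarith [Complex.re_le_norm w, norm_nonneg z]⟩
  have hn₀ : (0 : ℝ) < n := by linarith [norm_nonneg z]
  have hbound : ∀ w ∈ Metric.closedBall (n : ℂ) ‖z‖, ‖f' w‖ ≤ A * ((n : ℝ) / 2) ^ a := by
    intro w hw
    refine (hf' w (by linarith [(hball w hw).2, norm_nonneg z])).trans ?_
    exact mul_le_mul_of_nonneg_left
      (Real.rpow_le_rpow_of_nonpos (by positivity) (hball w hw).2 ha) hA
  have hmvt := (convex_closedBall (n : ℂ) ‖z‖).norm_image_sub_le_of_norm_hasDerivWithin_le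
    (fun w hw ↦ (hf w (hball w hw).1).hasDerivWithinAt) hbound
    (x := (n : ℂ)) (y := z + n) (by simp) (by simp)
  rw [add_sub_cancel_right, div_eq_mul_one_div, Real.mul_rpow hn₀.le (by norm_num)] at hmvt
  rw [Real.norm_of_nonneg (by positivity)]
  linarith

lemma summable_logDiv_translate_sub (z : ℂ) :
    Summable fun n : ℕ ↦ logDiv (z + n) - logDiv n := by
  obtain ⟨A, -, hA⟩ := exists_norm_logDivDeriv_le one_pos
  exact summable_of_isBigO_nat (Real.summable_nat_rpow.2 (by norm_num))
    (isBigO_translate_sub (by norm_num) (fun _ ↦ hasDerivAt_logDiv) hA z)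

lemma tendsto_half_log_sq_translate_sub (z : ℂ) :
    Tendsto (fun n : ℕ ↦ Complex.log (z + n) ^ 2 / 2 - Complex.log n ^ 2 / 2) atTop (𝓝 0) := by
  obtain ⟨A, -, hA⟩ := exists_norm_logDiv_le one_pos
  exact (isBigO_translate_sub (f := fun z ↦ Complex.log z ^ 2 / 2) (by norm_num)
    (fun _ ↦ hasDerivAt_half_log_sq) hA z).trans_tendsto
    ((tendsto_rpow_neg_atTop (by norm_num)).comp tendsto_natCast_atTop_atTop)

lemma tendsto_logDiv_natCast : Tendsto (fun n : ℕ ↦ logDiv n) atTop (𝓝 0) := by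
  obtain ⟨A, -, hA⟩ := exists_norm_logDiv_le one_pos
  have hrpow : Tendsto (fun n : ℕ ↦ A * (n : ℝ) ^ (-(1 / 2) : ℝ)) atTop (𝓝 0) := by
    simpa using
      ((tendsto_rpow_neg_atTop (by norm_num)).comp tendsto_natCast_atTop_atTop).const_mul A
  refine squeeze_zero_norm' ?_ hrpow
  filter_upwards [eventually_ge_atTop 1] with n hn
  simpa using hA n (by simpa using hn)

lemma integrableOn_logDivKernel_translate {z : ℂ} (hz : z ∈ Complex.slitPlane) :
    IntegrableOn (fun s : ℝ ↦ logDivKernel (z + s)) (Set.Ioi 0) := by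
  obtain ⟨A, hA₀, hA⟩ := exists_norm_logDivKernel_le one_pos
  have hcont : ContinuousOn (fun s : ℝ ↦ logDivKernel (z + s)) (Set.Ici 0) :=
    continuousOn_logDivKernel.comp (by fun_prop) fun s hs ↦ add_ofReal_mem_slitPlane hz hs
  refine IntegrableOn.mono_set ?_ Set.Ioi_subset_Ici_self
  refine (hcont.locallyIntegrableOn measurableSet_Ici).integrableOn_of_isBigO_atTop
    (g := fun s ↦ s ^ (-(5 / 2) : ℝ)) (.of_bound (A * (1 / 2) ^ (-(5 / 2) : ℝ)) ?_)
    ⟨Set.Ioi 1, Ioi_mem_atTop 1, integrableOn_Ioi_rpow_of_lt (by norm_num) one_pos⟩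
  filter_upwards [eventually_ge_atTop (2 * (‖z‖ + 1))] with s hs
  have hs₀ : 0 < s := by linarith [norm_nonneg z]
  have hnorm : s / 2 ≤ ‖z + s‖ := by
    have h := norm_sub_norm_le (s : ℂ) (-z)
    rw [sub_neg_eq_add, norm_neg, Complex.norm_real, Real.norm_of_nonneg hs₀.le, add_comm] at h
    linarith [norm_nonneg z]
  calc ‖logDivKernel (z + s)‖ ≤ A * ‖z + s‖ ^ (-(5 / 2) : ℝ) :=
        hA _ (by linarith [norm_nonneg z])
    _ ≤ A * (s * (1 / 2)) ^ (-(5 / 2) : ℝ) := by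
        refine mul_le_mul_of_nonneg_left ?_ hA₀.le
        exact Real.rpow_le_rpow_of_nonpos (by positivity) (by linarith) (by norm_num)
    _ = A * (1 / 2) ^ (-(5 / 2) : ℝ) * ‖s ^ (-(5 / 2) : ℝ)‖ := by
        rw [Real.mul_rpow hs₀.le (by norm_num), Real.norm_of_nonneg (by positivity)]
        ring

lemma tendsto_sum_logDiv_translate {z : ℂ} (hz : z ∈ Complex.slitPlane) :
    Tendsto (fun N : ℕ ↦ ∑ k ∈ Finset.range N, logDiv (z + (k + 1))
        - Complex.log (z + N) ^ 2 / 2) atTop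
      (𝓝 (-(∫ s in Set.Ioi (0 : ℝ), emKernel s • logDivKernel (z + s)) - logDiv z / 2
        - Complex.log z ^ 2 / 2)) := by
  have hmem {s : ℝ} (hs : 0 < s) := add_ofReal_mem_slitPlane hz hs.le
  have htranslate {h h' : ℂ → ℂ} (hh : ∀ w ∈ Complex.slitPlane, HasDerivAt h (h' w) w) :
      ∀ s : ℝ, 0 < s → HasDerivAt (fun s : ℝ ↦ h (z + s)) (h' (z + s)) s := fun s hs ↦
    ((hh _ (hmem hs)).comp_const_add z s).comp_ofReal
  have hzero {h h' : ℂ → ℂ} (hh : ∀ w ∈ Complex.slitPlane, HasDerivAt h (h' w) w) :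
      Tendsto (fun s : ℝ ↦ h (z + s)) (𝓝[>] 0) (𝓝 (h z)) := by
    have hadd : Tendsto (fun s : ℝ ↦ z + s) (𝓝[>] 0) (𝓝 z) :=
      (Continuous.tendsto' (by fun_prop) _ _ (by simp)).mono_left nhdsWithin_le_nhds
    exact (hh z hz).continuousAt.tendsto.comp hadd
  have hderiv₀ : Tendsto (fun s : ℝ ↦ s • logDivDeriv (z + s)) (𝓝[>] 0) (𝓝 0) := by
    simpa using (tendsto_id.mono_left nhdsWithin_le_nhds).smul
      (hzero fun _ ↦ hasDerivAt_logDivDeriv)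
  have hlim : Tendsto (fun N : ℕ ↦ logDiv (z + N)) atTop (𝓝 0) := by
    simpa using (summable_logDiv_translate_sub z).tendsto_atTop_zero.add tendsto_logDiv_natCast
  have hint : IntegrableOn (fun s : ℝ ↦ emKernel s • -logDivKernel (z + s)) (Set.Ioi 0) :=
    integrableOn_emKernel_smul (integrableOn_logDivKernel_translate hz).neg
  have h := tendsto_sum_sub_primitive (htranslate fun _ ↦ hasDerivAt_half_log_sq)
    (htranslate fun _ ↦ hasDerivAt_logDiv) (htranslate fun _ ↦ hasDerivAt_logDivDeriv)
    (hzero fun _ ↦ hasDerivAt_half_log_sq) (hzero fun _ ↦ hasDerivAt_logDiv) hderiv₀ hint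
    (by simpa using hlim)
  simp only [smul_neg, integral_neg, Complex.real_smul] at h ⊢
  convert! h using 2
  · push_cast
    rfl
  · push_cast
    ring

lemma ofReal_sum_log_div_sub (N : ℕ) :
    ((∑ j ∈ Finset.Icc 1 N, Real.log j / j - Real.log N ^ 2 / 2 : ℝ) : ℂ) =
      ∑ k ∈ Finset.range N, logDiv (k + 1) - Complex.log N ^ 2 / 2 := by
  have hsum : ((∑ j ∈ Finset.Icc 1 N, Real.log j / j : ℝ) : ℂ) =
      ∑ k ∈ Finset.range N, logDiv (k + 1) := by
    induction N with
    | zero => simp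
    | succ N ih =>
      rw [Finset.sum_Icc_succ_top (by simp), Finset.sum_range_succ, ← ih, Complex.ofReal_add,
        Complex.ofReal_div, Complex.natCast_log, Complex.ofReal_natCast, logDiv, Nat.cast_succ]
  rw [← hsum]
  push_cast [Complex.natCast_log]
  rfl

lemma tendsto_sum_log_div_sub : Tendsto
    (fun N : ℕ ↦ ∑ j ∈ Finset.Icc 1 N, Real.log j / j - Real.log N ^ 2 / 2) atTop (𝓝 gamma1) := by
  have hone := tendsto_sum_logDiv_translate (z := 1) (by simp)
  refine tendsto_nhds_limUnder ⟨_, (tendsto_add_atTop_iff_nat 1).1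
    (((Complex.continuous_re.tendsto _).comp hone).congr fun N ↦ ?_)⟩
  rw [← Complex.ofReal_re (∑ j ∈ _, _ - _), ofReal_sum_log_div_sub, Finset.sum_range_succ']
  simp [logDiv, add_comm]

lemma tendsto_sum_logDiv_sub :
    Tendsto (fun N : ℕ ↦ ∑ k ∈ Finset.range N, logDiv (k + 1) - Complex.log N ^ 2 / 2) atTop
      (𝓝 (gamma1 : ℂ)) :=
  ((Complex.continuous_ofReal.tendsto _).comp tendsto_sum_log_div_sub).congr ofReal_sum_log_div_sub

lemma integral_emKernel_smul_logDivKernel {z : ℂ} (hz : z ∈ Complex.slitPlane) :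
    ∫ s in Set.Ioi (0 : ℝ), emKernel s • logDivKernel (z + s) =
      psi1 z - Complex.log z ^ 2 / 2 + logDiv z / 2 := by
  have hsum := ((summable_nat_add_iff 1).2 (summable_logDiv_translate_sub z)).hasSum
    |>.tendsto_sum_nat
  have hdiff := ((tendsto_sum_logDiv_translate hz).sub tendsto_sum_logDiv_sub).add
    (tendsto_half_log_sq_translate_sub z)
  have hval := tendsto_nhds_unique hsum (hdiff.congr fun N ↦ ?_)
  · have hpsi : psi1 z = -(gamma1 : ℂ) - logDiv z -
        ∑' n : ℕ, (logDiv (z + (n + 1 : ℕ)) - logDiv (n + 1 : ℕ)) := by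
      simp only [psi1, logDiv, Nat.cast_succ, add_comm z]
    linear_combination hval - hpsi
  · simp only [Nat.cast_add, Nat.cast_one, Finset.sum_sub_distrib]
    ring

end Binet

section Lattice

/-- The point `2πin / y` of the lattice dual to `y⁻¹ ℤ`, in the normalization of Laplace
transforms. -/
noncomputable def dualPoint (y : ℂ) (n : ℤ) : ℂ := 2 * Real.pi * Complex.I * n / y

variable {y : ℂ}

lemma dualPoint_neg (y : ℂ) (n : ℤ) : dualPoint y (-n) = -dualPoint y n := by
  rw [dualPoint, dualPoint]
  push_cast
  ring

lemma add_dualPoint (hy : 0 < y.re) (s : ℂ) (n : ℤ) :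
    s + dualPoint y n = (s * y + 2 * Real.pi * n * Complex.I) / y := by
  have hy₀ : y ≠ 0 := Complex.ne_zero_of_re_pos hy
  rw [dualPoint]
  field_simp

lemma dualPoint_im (y : ℂ) (n : ℤ) :
    (dualPoint y n).im = 2 * Real.pi * n * y.re / Complex.normSq y := by
  simp [dualPoint, Complex.div_im]

lemma dualPoint_mem_slitPlane (hy : 0 < y.re) {n : ℤ} (hn : n ≠ 0) :
    dualPoint y n ∈ Complex.slitPlane := by
  have hy₀ : y ≠ 0 := Complex.ne_zero_of_re_pos hy
  right
  rw [dualPoint_im]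
  simp [hn, hy.ne', hy₀, Real.pi_ne_zero]

lemma exists_mul_add_abs_le_norm_add_dualPoint (hy : 0 < y.re) :
    ∃ c : ℝ, 0 < c ∧ ∀ (n : ℤ) (s : ℝ), 0 ≤ s → c * (s + |(n : ℝ)|) ≤ ‖s + dualPoint y n‖ := by
  have hy₀ : 0 < ‖y‖ := norm_pos_iff.2 (Complex.ne_zero_of_re_pos hy)
  refine ⟨y.re / (‖y‖ * (1 + y.re + ‖y‖)), by positivity, fun n s hs ↦ ?_⟩
  rw [add_dualPoint hy, norm_div, div_mul_eq_mul_div,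
    div_le_div_iff₀ (by positivity) hy₀]
  set w : ℂ := s * y + 2 * Real.pi * n * Complex.I with hw
  have hre : s * y.re ≤ ‖w‖ := by
    simpa [hw] using Complex.re_le_norm w
  have hn : |(n : ℝ)| ≤ ‖w‖ + s * ‖y‖ := by
    calc |(n : ℝ)| ≤ 2 * Real.pi * |(n : ℝ)| :=
          le_mul_of_one_le_left (abs_nonneg _) (by linarith [Real.pi_gt_three])
      _ = ‖w - s * y‖ := by simp [hw, abs_of_pos Real.pi_pos]
      _ ≤ ‖w‖ + s * ‖y‖ := (norm_sub_le _ _).trans_eq (by simp [abs_of_nonneg hs])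
  have hmul : y.re * (s + |(n : ℝ)|) ≤ ‖w‖ * (1 + y.re + ‖y‖) := by
    have h₁ := mul_le_mul_of_nonneg_left hn hy.le
    have h₂ := mul_le_mul_of_nonneg_right hre hy₀.le
    linarith
  calc y.re * (s + |(n : ℝ)|) * ‖y‖ ≤ ‖w‖ * (1 + y.re + ‖y‖) * ‖y‖ := by gcongr
    _ = ‖w‖ * (‖y‖ * (1 + y.re + ‖y‖)) := by ring

lemma exists_norm_logDivKernel_add_dualPoint_le (hy : 0 < y.re) :
    ∃ A : ℝ, 0 < A ∧ ∀ (n : ℤ) (s : ℝ), n ≠ 0 → 0 ≤ s →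
      ‖logDivKernel (s + dualPoint y n)‖
        ≤ A * (s + 1) ^ (-(5 / 4) : ℝ) * |(n : ℝ)| ^ (-(5 / 4) : ℝ) := by
  obtain ⟨c, hc, hnorm⟩ := exists_mul_add_abs_le_norm_add_dualPoint hy
  obtain ⟨A, hA, hF⟩ := exists_norm_logDivKernel_le hc
  refine ⟨A * c ^ (-(5 / 2) : ℝ), by positivity, fun n s hn hs ↦ ?_⟩
  have hn₁ : 1 ≤ |(n : ℝ)| := mod_cast Int.one_le_abs hn
  have hsn := hnorm n s hs
  have hgeom : (s + |(n : ℝ)|) ^ (-(5 / 2) : ℝ) ≤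
      (s + 1) ^ (-(5 / 4) : ℝ) * |(n : ℝ)| ^ (-(5 / 4) : ℝ) := by
    have hsplit : (s + |(n : ℝ)|) ^ (-(5 / 2) : ℝ) =
        (s + |(n : ℝ)|) ^ (-(5 / 4) : ℝ) * (s + |(n : ℝ)|) ^ (-(5 / 4) : ℝ) := by
      rw [← Real.rpow_add (by positivity)]
      norm_num
    rw [hsplit]
    gcongr ?_ * ?_
    · exact Real.rpow_le_rpow_of_nonpos (by positivity) (by linarith) (by norm_num)
    · exact Real.rpow_le_rpow_of_nonpos (by positivity) (by linarith) (by norm_num)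
  calc ‖logDivKernel (s + dualPoint y n)‖
      ≤ A * ‖s + dualPoint y n‖ ^ (-(5 / 2) : ℝ) := hF _ (le_trans (by nlinarith) hsn)
    _ ≤ A * (c * (s + |(n : ℝ)|)) ^ (-(5 / 2) : ℝ) := by
        gcongr A * ?_
        exact Real.rpow_le_rpow_of_nonpos (by positivity) hsn (by norm_num)
    _ ≤ A * c ^ (-(5 / 2) : ℝ) * (s + 1) ^ (-(5 / 4) : ℝ) * |(n : ℝ)| ^ (-(5 / 4) : ℝ) := by
        rw [Real.mul_rpow hc.le (by positivity), mul_assoc _ (_ ^ _) (_ ^ _), mul_assoc A]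
        gcongr

lemma summable_logDivKernel_add_dualPoint (hy : 0 < y.re) {s : ℝ} (hs : 0 ≤ s) :
    Summable fun n : ℤ ↦ logDivKernel (s + dualPoint y n) := by
  obtain ⟨A, -, hA⟩ := exists_norm_logDivKernel_add_dualPoint_le hy
  refine .of_norm_bounded_eventually ((Real.summable_abs_int_rpow (b := 5 / 4)
    (by norm_num)).mul_left (A * (s + 1) ^ (-(5 / 4) : ℝ))) ?_
  filter_upwards [(Set.finite_singleton (0 : ℤ)).compl_mem_cofinite] with n hn
  exact hA n s hn hs

lemma log_neg_of_im_pos {z : ℂ} (hz : 0 < z.im) :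
    Complex.log (-z) = Complex.log z - Real.pi * Complex.I := by
  rw [Complex.log, Complex.log, norm_neg, Complex.arg_neg_eq_arg_sub_pi_of_im_pos hz]
  push_cast
  ring

lemma logDiv_add_logDiv_neg {z : ℂ} (hz : 0 < z.im) :
    logDiv z + logDiv (-z) = Real.pi * Complex.I / z := by
  rw [logDiv, logDiv, log_neg_of_im_pos hz, div_neg]
  ring

lemma psiTerm_eq_integral_add_integral (hy : 0 < y.re) (n : ℕ) :
    psiTerm y n =
      (∫ s in Set.Ioi (0 : ℝ), emKernel s • logDivKernel (dualPoint y (n + 1) + s)) +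
        ∫ s in Set.Ioi (0 : ℝ), emKernel s • logDivKernel (dualPoint y (-(n + 1)) + s) := by
  have hy₀ : y ≠ 0 := Complex.ne_zero_of_re_pos hy
  have hn : (n + 1 : ℂ) ≠ 0 := n.cast_add_one_ne_zero
  have him : 0 < (dualPoint y (n + 1)).im := by
    rw [dualPoint_im]
    have := Complex.normSq_pos.2 hy₀
    push_cast
    positivity
  have hlogDiv := logDiv_add_logDiv_neg him
  have hz : dualPoint y (n + 1) = 2 * Real.pi * Complex.I * (n + 1) / y := by simp [dualPoint]
  have hpi : Real.pi * Complex.I / dualPoint y (n + 1) = y / (2 * (n + 1)) := by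
    rw [hz]
    field_simp [Real.pi_ne_zero]
  rw [integral_emKernel_smul_logDivKernel (dualPoint_mem_slitPlane hy (by lia)),
    integral_emKernel_smul_logDivKernel (dualPoint_mem_slitPlane hy (by lia)), psiTerm,
    dualPoint_neg, ← hz]
  have hquarter : y / (4 * (n + 1)) = y / (2 * (n + 1)) / 2 := by
    field_simp
    norm_num
  linear_combination hquarter - (hlogDiv.trans hpi) / 2

end Lattice

section Poisson

/-- The summand of the Poisson summation: `x ^ 2 * (c + log x) * exp (-(p * x))`, extended by zero
to the negative half-line. -/
noncomputable def sqLogExp (c p : ℂ) : ℝ → ℂ :=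
  (Set.Ici 0).indicator fun x ↦ (x : ℂ) ^ 2 * (c + Real.log x) * Complex.exp (-(p * x))

lemma sqLogExp_of_nonneg (c p : ℂ) {x : ℝ} (hx : 0 ≤ x) :
    sqLogExp c p x = (x : ℂ) ^ 2 * (c + Real.log x) * Complex.exp (-(p * x)) :=
  Set.indicator_of_mem hx _

lemma sqLogExp_of_nonpos (c p : ℂ) {x : ℝ} (hx : x ≤ 0) : sqLogExp c p x = 0 := by
  rcases hx.lt_or_eq with hneg | rfl
  · exact Set.indicator_of_notMem (not_le.2 hneg) _
  · simp [sqLogExp]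

lemma continuous_sqLogExp (c p : ℂ) : Continuous (sqLogExp c p) := by
  refine continuous_indicator (by simp) (Continuous.continuousOn ?_)
  have hlog : Continuous fun x : ℝ ↦ (x : ℂ) * ((x * c) + (x * Real.log x : ℝ)) := by
    have := Real.continuous_mul_log
    fun_prop
  refine Continuous.mul (hlog.congr fun x ↦ ?_) (by fun_prop)
  push_cast
  ring

lemma isBigO_sqLogExp (c : ℂ) {p : ℂ} (hp : 0 < p.re) :
    sqLogExp c p =O[cocompact ℝ] (|·| ^ (-2 : ℝ)) := by
  rw [cocompact_eq_atBot_atTop, Asymptotics.isBigO_sup]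
  constructor
  · refine (Asymptotics.isBigO_zero _ _).congr' ?_ .rfl
    filter_upwards [eventually_le_atBot 0] with x hx using (sqLogExp_of_nonpos c p hx).symm
  · have hsq : (fun x : ℝ ↦ (x : ℂ) ^ 2) =O[atTop] fun x : ℝ ↦ x ^ 2 :=
      .of_bound 1 (.of_forall fun x ↦ by simp)
    have hlog : (fun x : ℝ ↦ c + Real.log x) =O[atTop] fun x : ℝ ↦ x := by
      refine (Asymptotics.isLittleO_const_id_atTop c).isBigO.add ?_
      exact .of_norm_left (by simpa using Real.isLittleO_log_id_atTop.isBigO.norm_left)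
    refine ((hsq.mul hlog).mul (isBigO_exp_neg_mul_atTop hp 5)).congr' ?_ ?_
    · filter_upwards [eventually_ge_atTop 0] with x hx using (sqLogExp_of_nonneg c p hx).symm
    · filter_upwards [eventually_gt_atTop 0] with x hx
      rw [abs_of_pos hx, ← pow_succ, ← Real.rpow_natCast, ← Real.rpow_add hx]
      norm_num

lemma fourier_sqLogExp (c : ℂ) {p : ℂ} (hp : 0 < p.re) (t : ℝ) :
    FourierTransform.fourier (sqLogExp c p) t =
      (3 - 2 * eulerGamma + 2 * c - 2 * Complex.log (p + 2 * Real.pi * t * Complex.I)) /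
        (p + 2 * Real.pi * t * Complex.I) ^ 3 := by
  rw [Real.fourier_real_eq_integral_exp_smul,
    ← integral_sq_mul_const_add_log_mul_exp_neg_mul c (by simpa using hp),
    ← integral_Ici_eq_integral_Ioi, ← integral_indicator measurableSet_Ici]
  congr with x
  by_cases hx : x ∈ Set.Ici 0
  · rw [Set.indicator_of_mem hx, sqLogExp_of_nonneg c p hx, smul_eq_mul, mul_left_comm,
      ← Complex.exp_add]
    push_cast
    ring_nf
  · rw [Set.indicator_of_notMem hx, sqLogExp_of_nonpos c p (not_le.1 hx).le, smul_zero]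

lemma tsum_int_sqLogExp (c p : ℂ) :
    ∑' n : ℤ, sqLogExp c p n =
      ∑' m : ℕ, (m + 1 : ℂ) ^ 2 * (c + Real.log (m + 1)) * Complex.exp (-(p * (m + 1))) := by
  have hsupport : Function.support (fun n : ℤ ↦ sqLogExp c p n) ⊆
      Set.range fun m : ℕ ↦ (m + 1 : ℤ) := by
    intro n hn
    have hpos : 0 < n := by
      by_contra! hle
      exact hn (sqLogExp_of_nonpos c p (mod_cast hle))
    exact ⟨(n - 1).toNat, by simp; lia⟩
  have hinj : Function.Injective fun m : ℕ ↦ (m + 1 : ℤ) := fun _ _ h ↦ by simpa using h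
  rw [← hinj.tsum_eq hsupport]
  refine tsum_congr fun m ↦ ?_
  rw [sqLogExp_of_nonneg c p (mod_cast (m + 1).zero_le)]
  push_cast
  rfl

lemma log_div_of_re_pos {p y : ℂ} (hp : 0 < p.re) (hy : 0 < y.re) :
    Complex.log (p / y) = Complex.log p - Complex.log y := by
  have hp_arg := abs_lt.1 (Complex.abs_arg_lt_pi_div_two_iff.2 (.inl hp))
  have hy_arg := abs_lt.1 (Complex.abs_arg_lt_pi_div_two_iff.2 (.inl hy))
  have hy_ne_pi : y.arg ≠ Real.pi := by linarith [Real.pi_pos]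
  have hp₀ : p ≠ 0 := Complex.ne_zero_of_re_pos hp
  have hy₀ : y ≠ 0 := Complex.ne_zero_of_re_pos hy
  rw [div_eq_mul_inv, Complex.log_mul hp₀ (inv_ne_zero hy₀), Complex.log_inv _ hy_ne_pi,
    sub_eq_add_neg]
  rw [Complex.arg_inv, if_neg hy_ne_pi]
  constructor <;> linarith

lemma tsum_logDivKernel_add_dualPoint {y : ℂ} (hy : 0 < y.re) {s : ℝ} (hs : 0 < s) :
    ∑' n : ℤ, logDivKernel (s + dualPoint y n) =
      y ^ 3 * ∑' m : ℕ, (m + 1 : ℂ) ^ 2 * (eulerGamma + Complex.log y + Real.log (m + 1)) *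
        Complex.exp (-(s * y * (m + 1))) := by
  have hy₀ : y ≠ 0 := Complex.ne_zero_of_re_pos hy
  have hp : 0 < (s * y).re := by simpa using mul_pos hs hy
  have hfourier (n : ℤ) : FourierTransform.fourier (sqLogExp (eulerGamma + Complex.log y) (s * y)) n
      = (y ^ 3)⁻¹ * logDivKernel (s + dualPoint y n) := by
    rw [fourier_sqLogExp _ hp, add_dualPoint hy, logDivKernel, Complex.ofReal_intCast,
      log_div_of_re_pos (by simpa using hp) hy]
    field_simp
    ring
  have hpoisson := Real.tsum_eq_tsum_fourier_of_rpow_decay_of_summable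
    (continuous_sqLogExp (eulerGamma + Complex.log y) (s * y)) one_lt_two (isBigO_sqLogExp _ hp)
    (((summable_logDivKernel_add_dualPoint hy hs.le).mul_left _).congr fun n ↦ (hfourier n).symm) 0
  simp only [zero_add, tsum_int_sqLogExp, hfourier, QuotientAddGroup.mk_zero, fourier_eval_zero,
    mul_one, tsum_mul_left] at hpoisson
  rw [hpoisson, mul_inv_cancel_left₀ (pow_ne_zero 3 hy₀)]

end Poisson

section DualKernelSum

/-- The values of `logDivKernel` at the translates of `s` by the opposite dual lattice points of
index `n + 1` and `-(n + 1)`. -/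
noncomputable def dualKernelPair (y : ℂ) (n : ℕ) (s : ℝ) : ℂ :=
  logDivKernel (s + dualPoint y (n + 1)) + logDivKernel (s + dualPoint y (-(n + 1)))

/-- The sum of `logDivKernel` over the translates of `s` by all nonzero dual lattice points. -/
noncomputable def dualKernelSum (y : ℂ) (s : ℝ) : ℂ := ∑' n : ℕ, dualKernelPair y n s

variable {y : ℂ}

lemma summable_nat_add_one_rpow {a : ℝ} (ha : a < -1) :
    Summable fun n : ℕ ↦ (n + 1 : ℝ) ^ a :=
  ((summable_nat_add_iff 1).2 (Real.summable_nat_rpow.2 ha)).congr fun n ↦ by push_cast; rfl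

lemma exists_norm_dualKernelPair_le (hy : 0 < y.re) :
    ∃ A : ℝ, 0 < A ∧ ∀ (n : ℕ) (s : ℝ), 0 ≤ s →
      ‖dualKernelPair y n s‖
        ≤ A * (s + 1) ^ (-(5 / 4) : ℝ) * (n + 1 : ℝ) ^ (-(5 / 4) : ℝ) := by
  obtain ⟨A, hA, h⟩ := exists_norm_logDivKernel_add_dualPoint_le hy
  refine ⟨2 * A, by positivity, fun n s hs ↦ (norm_add_le _ _).trans ?_⟩
  have habs : |(n : ℝ) + 1| = n + 1 := abs_of_nonneg (by positivity)
  have hpos := h (n + 1) s (by lia) hs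
  have hneg := h (-(n + 1)) s (by lia) hs
  push_cast at hpos hneg
  rw [habs] at hpos
  rw [abs_neg, habs] at hneg
  linarith

lemma continuousOn_dualKernelPair (hy : 0 < y.re) (n : ℕ) :
    ContinuousOn (dualKernelPair y n) (Set.Ici 0) := by
  have h {m : ℤ} (hm : m ≠ 0) :
      ContinuousOn (fun s : ℝ ↦ logDivKernel (s + dualPoint y m)) (Set.Ici 0) := by
    refine continuousOn_logDivKernel.comp (by fun_prop) fun s hs ↦ ?_
    rw [add_comm]
    exact add_ofReal_mem_slitPlane (dualPoint_mem_slitPlane hy hm) hs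
  exact (h (by lia)).add (h (by lia))

lemma tsum_logDivKernel_add_dualPoint_eq_add_dualKernelSum (hy : 0 < y.re) {s : ℝ} (hs : 0 ≤ s) :
    ∑' n : ℤ, logDivKernel (s + dualPoint y n) = logDivKernel s + dualKernelSum y s := by
  have hsum := summable_logDivKernel_add_dualPoint hy hs
  have hpos : Summable fun n : ℕ ↦ logDivKernel (s + dualPoint y (n + 1)) :=
    hsum.comp_injective (i := fun n : ℕ ↦ (n + 1 : ℤ)) fun _ _ h ↦ by simpa using h
  have hneg : Summable fun n : ℕ ↦ logDivKernel (s + dualPoint y (-(n + 1))) :=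
    hsum.comp_injective (i := fun n : ℕ ↦ (-(n + 1) : ℤ)) fun _ _ h ↦ by simpa using h
  have hzero : logDivKernel (s + dualPoint y 0) = logDivKernel s := by simp [dualPoint]
  have hpair : dualKernelSum y s = _ := hpos.tsum_add hneg
  rw [tsum_of_add_one_of_neg_add_one (f := fun n : ℤ ↦ logDivKernel (s + dualPoint y n)) hpos hneg,
    hpair, hzero, add_right_comm, add_comm]

lemma exists_norm_dualKernelSum_le (hy : 0 < y.re) :
    ∃ A : ℝ, 0 < A ∧ ∀ s : ℝ, 0 ≤ s → ‖dualKernelSum y s‖ ≤ A * (s + 1) ^ (-(5 / 4) : ℝ) := by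
  obtain ⟨A, hA, h⟩ := exists_norm_dualKernelPair_le hy
  have hsum : Summable fun n : ℕ ↦ (n + 1 : ℝ) ^ (-(5 / 4) : ℝ) :=
    summable_nat_add_one_rpow (by norm_num)
  refine ⟨A * ∑' n : ℕ, (n + 1 : ℝ) ^ (-(5 / 4) : ℝ),
    mul_pos hA (hsum.tsum_pos (fun _ ↦ by positivity) 0 (by simp)), fun s hs ↦ ?_⟩
  rw [mul_right_comm]
  exact tsum_of_norm_bounded (hsum.hasSum.mul_left _) fun n ↦ h n s hs

lemma continuousOn_dualKernelSum (hy : 0 < y.re) : ContinuousOn (dualKernelSum y) (Set.Ici 0) := by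
  obtain ⟨A, hA, h⟩ := exists_norm_dualKernelPair_le hy
  refine continuousOn_tsum (continuousOn_dualKernelPair hy)
    ((summable_nat_add_one_rpow (a := -(5 / 4)) (by norm_num)).mul_left A) fun n s hs ↦
    (h n s hs).trans ?_
  gcongr
  exact mul_le_of_le_one_right hA.le (Real.rpow_le_one_of_one_le_of_nonpos
    (le_add_of_nonneg_left hs) (by norm_num))

lemma integrableOn_add_one_rpow : IntegrableOn (fun s : ℝ ↦ (s + 1) ^ (-(5 / 4) : ℝ)) (Set.Ioi 0) :=
  integrableOn_add_rpow_Ioi_of_lt (by norm_num) (by norm_num)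

lemma integrableOn_dualKernelSum (hy : 0 < y.re) : IntegrableOn (dualKernelSum y) (Set.Ioi 0) := by
  obtain ⟨A, -, h⟩ := exists_norm_dualKernelSum_le hy
  exact (integrableOn_add_one_rpow.const_mul A).mono'
    (((continuousOn_dualKernelSum hy).mono Set.Ioi_subset_Ici_self).aestronglyMeasurable
      measurableSet_Ioi)
    ((ae_restrict_iff' measurableSet_Ioi).2 (.of_forall fun s hs ↦ h s hs.le))

lemma psiTerm_eq_integral_dualKernelPair (hy : 0 < y.re) (n : ℕ) :
    psiTerm y n = ∫ s in Set.Ioi (0 : ℝ), emKernel s • dualKernelPair y n s := by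
  have hint {m : ℤ} (hm : m ≠ 0) : IntegrableOn
      (fun s ↦ emKernel s • logDivKernel (dualPoint y m + s)) (Set.Ioi 0) :=
    integrableOn_emKernel_smul (integrableOn_logDivKernel_translate (dualPoint_mem_slitPlane hy hm))
  rw [psiTerm_eq_integral_add_integral hy, ← integral_add (hint (by lia)) (hint (by lia))]
  simp only [← smul_add, add_comm (dualPoint y _), dualKernelPair]

lemma hasSum_psiTerm (hy : 0 < y.re) :
    HasSum (psiTerm y) (∫ s in Set.Ioi (0 : ℝ), emKernel s • dualKernelSum y s) := by
  obtain ⟨A, -, h⟩ := exists_norm_dualKernelPair_le hy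
  have hbound (n : ℕ) : ∀ᵐ s ∂volume.restrict (Set.Ioi 0), ‖emKernel s • dualKernelPair y n s‖ ≤
      A * (n + 1 : ℝ) ^ (-(5 / 4) : ℝ) * (s + 1) ^ (-(5 / 4) : ℝ) := by
    refine (ae_restrict_iff' measurableSet_Ioi).2 (.of_forall fun s (hs : 0 < s) ↦ ?_)
    rw [norm_smul, mul_right_comm]
    exact (mul_le_of_le_one_left (norm_nonneg _) (norm_emKernel_le_one s)).trans (h n s hs.le)
  have hmajorant (n : ℕ) := integrableOn_add_one_rpow.const_mul (A * (n + 1) ^ (-(5 / 4) : ℝ))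
  have hint (n : ℕ) :
      IntegrableOn (fun s ↦ emKernel s • dualKernelPair y n s) (Set.Ioi 0) :=
    (hmajorant n).mono' (measurable_emKernel.aestronglyMeasurable.smul
      (((continuousOn_dualKernelPair hy n).mono Set.Ioi_subset_Ici_self).aestronglyMeasurable
        measurableSet_Ioi)) (hbound n)
  have hnorm : Summable fun n ↦ ∫ s in Set.Ioi (0 : ℝ), ‖emKernel s • dualKernelPair y n s‖ := by
    refine .of_nonneg_of_le (fun n ↦ integral_nonneg fun s ↦ norm_nonneg _)
      (fun n ↦ (integral_mono_ae (hint n).norm (hmajorant n) (hbound n)).trans_eq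
        (integral_const_mul _ _)) ?_
    exact ((summable_nat_add_one_rpow (by norm_num)).mul_left A).mul_right _
  have hsum := hasSum_integral_of_summable_integral_norm hint hnorm
  simp only [← psiTerm_eq_integral_dualKernelPair hy] at hsum
  simpa only [dualKernelSum, tsum_const_smul''] using hsum

end DualKernelSum

section ExpSeries

/-- The general Dirichlet series `∑ c m * exp (-(m + 1) * w)`, that is, the power series in
`exp (-w)` without constant term and with coefficients `c`. -/
noncomputable def expSeries (c : ℕ → ℂ) (w : ℂ) : ℂ := ∑' m : ℕ, c m * Complex.exp (-(w * (m + 1)))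

variable {c : ℕ → ℂ} {k : ℕ}

lemma norm_mul_exp_neg_mul_add_one (c : ℕ → ℂ) (w : ℂ) (m : ℕ) :
    ‖c m * Complex.exp (-(w * (m + 1)))‖ = ‖c m‖ * Real.exp (-(w.re * (m + 1))) := by
  have h := norm_exp_neg_mul_ofReal w (m + 1)
  push_cast at h
  rw [norm_mul, h]

lemma summable_norm_mul_exp (hc : c =O[atTop] fun m : ℕ ↦ (m : ℝ) ^ k) {b : ℝ} (hb : 0 < b) :
    Summable fun m : ℕ ↦ ‖c m‖ * Real.exp (-(b * (m + 1))) := by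
  refine summable_of_isBigO_nat ((Real.summable_pow_mul_exp_neg_nat_mul k hb).mul_right
    (Real.exp (-b))) ((hc.norm_left.mul (Asymptotics.isBigO_refl _ _)).congr_right fun m ↦ ?_)
  rw [mul_assoc, ← Real.exp_add]
  ring_nf

lemma summable_expSeries (hc : c =O[atTop] fun m : ℕ ↦ (m : ℝ) ^ k) {w : ℂ} (hw : 0 < w.re) :
    Summable fun m : ℕ ↦ c m * Complex.exp (-(w * (m + 1))) :=
  .of_norm (by simpa only [norm_mul_exp_neg_mul_add_one] using summable_norm_mul_exp hc hw)

lemma isBigO_add_one_mul (hc : c =O[atTop] fun m : ℕ ↦ (m : ℝ) ^ k) :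
    (fun m : ℕ ↦ (m + 1) * c m) =O[atTop] fun m : ℕ ↦ (m : ℝ) ^ (k + 1) := by
  have h : (fun m : ℕ ↦ (m + 1 : ℂ)) =O[atTop] fun m : ℕ ↦ (m : ℝ) := by
    refine .of_bound 2 ?_
    filter_upwards [eventually_ge_atTop 1] with m hm
    have hm' : (1 : ℝ) ≤ m := mod_cast hm
    rw [← Nat.cast_succ, Complex.norm_natCast, Real.norm_natCast, Nat.cast_succ]
    linarith
  exact (h.mul hc).congr_right fun m ↦ (pow_succ' _ _).symm

lemma hasDerivAt_expSeries (hc : c =O[atTop] fun m : ℕ ↦ (m : ℝ) ^ k) {w : ℂ} (hw : 0 < w.re) :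
    HasDerivAt (expSeries c) (-expSeries (fun m ↦ (m + 1) * c m) w) w := by
  have hopen : IsOpen {v : ℂ | w.re / 2 < v.re} := isOpen_lt continuous_const Complex.continuous_re
  have hconn : IsPreconnected {v : ℂ | w.re / 2 < v.re} :=
    (convex_halfSpace_re_gt _).isPreconnected
  have hderiv (m : ℕ) (v : ℂ) : HasDerivAt (fun v ↦ c m * Complex.exp (-(v * (m + 1))))
      (-((m + 1) * c m * Complex.exp (-(v * (m + 1))))) v := by
    refine (((hasDerivAt_id v).mul_const (m + 1 : ℂ)).neg.cexp.const_mul (c m)).congr_deriv ?_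
    simp only [id, Pi.neg_apply]
    ring
  refine (hasDerivAt_tsum_of_isPreconnected
    (summable_norm_mul_exp (isBigO_add_one_mul hc) (half_pos hw)) hopen hconn
    (fun m v _ ↦ hderiv m v) (fun m v hv ↦ ?_) (half_lt_self hw) (summable_expSeries hc hw)
    (half_lt_self hw)).congr_deriv tsum_neg
  have hv : w.re / 2 < v.re := hv
  rw [norm_neg, norm_mul_exp_neg_mul_add_one (fun m ↦ (m + 1) * c m)]
  gcongr

lemma summable_lambert (hc : c =O[atTop] fun m : ℕ ↦ (m : ℝ) ^ k) {w : ℂ} (hw : 0 < w.re) :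
    Summable fun p : ℕ × ℕ ↦ c p.1 * Complex.exp (-((p.2 + 1) * w * (p.1 + 1))) := by
  have hgeom : Summable fun j : ℕ ↦ Real.exp (-w.re) ^ j :=
    summable_geometric_of_lt_one (Real.exp_nonneg _) (by simpa using hw)
  refine .of_norm_bounded ((summable_norm_mul_exp hc hw).mul_of_nonneg hgeom
    (fun _ ↦ by positivity) fun _ ↦ by positivity) fun ⟨m, j⟩ ↦ ?_
  have hre : ((j + 1 : ℂ) * w).re = (j + 1) * w.re := by simp [Complex.add_re]
  rw [norm_mul_exp_neg_mul_add_one, mul_assoc, ← Real.exp_nat_mul, ← Real.exp_add, hre]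
  gcongr
  have : 0 ≤ (j : ℝ) * w.re * m := by positivity
  linarith

lemma norm_exp_neg_lt_one {w : ℂ} (hw : 0 < w.re) : ‖Complex.exp (-w)‖ < 1 := by
  simpa [Complex.norm_exp] using hw

lemma exp_sub_one (w : ℂ) : Complex.exp w - 1 = Complex.exp w * (1 - Complex.exp (-w)) := by
  rw [mul_sub, ← Complex.exp_add]
  simp

lemma hasSum_exp_neg_add_one_mul {w : ℂ} (hw : 0 < w.re) :
    HasSum (fun j : ℕ ↦ Complex.exp (-((j + 1) * w))) (1 / (Complex.exp w - 1)) := by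
  have hval : Complex.exp (-w) * (1 - Complex.exp (-w))⁻¹ = 1 / (Complex.exp w - 1) := by
    rw [exp_sub_one, one_div, mul_inv, Complex.exp_neg]
  have hterm (j : ℕ) :
      Complex.exp (-((j + 1) * w)) = Complex.exp (-w) * Complex.exp (-w) ^ j := by
    rw [← Complex.exp_nat_mul, ← Complex.exp_add]
    ring_nf
  simpa only [hterm, hval] using
    (hasSum_geometric_of_norm_lt_one (norm_exp_neg_lt_one hw)).mul_left (Complex.exp (-w))

lemma hasSum_expSeries_add_one_mul (hc : c =O[atTop] fun m : ℕ ↦ (m : ℝ) ^ k) {w : ℂ}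
    (hw : 0 < w.re) :
    HasSum (fun j : ℕ ↦ expSeries c ((j + 1) * w))
      (∑' m : ℕ, c m / (Complex.exp ((m + 1) * w) - 1)) := by
  have hsum := (summable_lambert hc hw).prod_symm
  have hinner (m : ℕ) : ∑' j : ℕ, c m * Complex.exp (-((j + 1) * w * (m + 1))) =
      c m / (Complex.exp ((m + 1) * w) - 1) := by
    have hre : 0 < ((m + 1) * w).re := by
      simpa using mul_pos (m.cast_add_one_pos (α := ℝ)) hw
    rw [div_eq_mul_one_div, ← (hasSum_exp_neg_add_one_mul hre).tsum_eq, tsum_mul_left]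
    simp only [mul_assoc, mul_comm w]
  simp only [← hinner]
  rw [Summable.tsum_comm (f := fun j m : ℕ ↦ c m * Complex.exp (-((j + 1) * w * (m + 1)))) hsum]
  exact hsum.prod.hasSum

lemma tendsto_expSeries_natCast_mul (hc : c =O[atTop] fun m : ℕ ↦ (m : ℝ) ^ k) {w : ℂ}
    (hw : 0 < w.re) : Tendsto (fun N : ℕ ↦ expSeries c (N * w)) atTop (𝓝 0) := by
  refine (tendsto_add_atTop_iff_nat 1).1 ?_
  simpa using (hasSum_expSeries_add_one_mul hc hw).summable.tendsto_atTop_zero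

end ExpSeries

section Harmonic

/-- The error in `log n + γ ≈ H n - 1 / (2 * n)` at `n = m + 1`, where `H` denotes the harmonic
numbers. -/
noncomputable def harmonicError (m : ℕ) : ℝ :=
  Real.log (m + 1) + eulerGamma - harmonic (m + 1) + 1 / (2 * (m + 1))

lemma harmonic_succ_real (m : ℕ) : (harmonic (m + 1) : ℝ) = harmonic m + 1 / (m + 1) := by
  rw [harmonic_succ]
  push_cast
  ring

lemma tendsto_harmonic_succ_sub_log :
    Tendsto (fun m : ℕ ↦ (harmonic (m + 1) : ℝ) - Real.log (m + 1)) atTop (𝓝 eulerGamma) := by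
  have h := (tendsto_add_atTop_iff_nat 1).2 Real.tendsto_harmonic_sub_log
  simp only [Nat.cast_add_one] at h
  exact h

lemma tendsto_harmonicError : Tendsto harmonicError atTop (𝓝 0) := by
  have h := ((tendsto_one_div_add_atTop_nhds_zero_nat (𝕜 := ℝ)).const_mul (1 / 2)).sub
    (tendsto_harmonic_succ_sub_log.sub_const eulerGamma)
  simp only [mul_zero, sub_self] at h
  refine h.congr fun m ↦ ?_
  rw [harmonicError]
  field_simp
  ring

lemma harmonicError_sub_succ (m : ℕ) :
    harmonicError m - harmonicError (m + 1) =
      (1 / (m + 1) + 1 / (m + 1 + 1)) / 2 - Real.log (1 + 1 / (m + 1)) := by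
  have hlog : Real.log (1 + 1 / (m + 1)) = Real.log (m + 1 + 1) - Real.log (m + 1) := by
    rw [← Real.log_div (by positivity) (by positivity)]
    congr 1
    field_simp
  rw [hlog, harmonicError, harmonicError, harmonic_succ_real (m + 1)]
  push_cast
  field_simp
  ring

lemma antitone_harmonicError : Antitone harmonicError := by
  refine antitone_nat_of_succ_le fun m ↦ sub_nonneg.1 ?_
  -- The trapezoidal rule overestimates `∫ 1 / x`: this is `t ≤ sinh t` at `t = log (1 + 1/(m+1))`.
  have hlog : 0 ≤ Real.log (1 + 1 / (m + 1 : ℝ)) :=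
    Real.log_nonneg (le_add_of_nonneg_right (by positivity))
  have hsinh := Real.self_le_sinh_iff.2 hlog
  rw [Real.sinh_log (by positivity)] at hsinh
  rw [harmonicError_sub_succ]
  refine sub_nonneg.2 (hsinh.trans_eq ?_)
  field_simp
  ring

lemma harmonicError_nonneg (m : ℕ) : 0 ≤ harmonicError m :=
  antitone_harmonicError.le_of_tendsto tendsto_harmonicError m

lemma trapezoid_sub_le {x : ℝ} (hx : 0 < x) :
    (1 / x + 1 / (x + 1)) / 2 - 2 / (2 * x + 1) ≤ 1 / x ^ 2 - 1 / (x + 1) ^ 2 := by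
  rw [← sub_nonneg]
  have h : 1 / x ^ 2 - 1 / (x + 1) ^ 2 - ((1 / x + 1 / (x + 1)) / 2 - 2 / (2 * x + 1)) =
      (7 * x ^ 2 + 7 * x + 2) / (2 * x ^ 2 * (x + 1) ^ 2 * (2 * x + 1)) := by
    field_simp
    ring
  rw [h]
  positivity

lemma harmonicError_le (m : ℕ) : harmonicError m ≤ 1 / (m + 1) ^ 2 := by
  have hmono : Monotone fun m : ℕ ↦ harmonicError m - 1 / (m + 1) ^ 2 := by
    refine monotone_nat_of_le_succ fun m ↦ ?_
    have hlog := Real.le_log_one_add_of_nonneg (show (0 : ℝ) ≤ 1 / (m + 1) by positivity)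
    have hpade : 2 * (1 / (m + 1)) / (1 / (m + 1) + 2) = 2 / (2 * (m + 1) + 1 : ℝ) := by
      field_simp
      ring
    have htrapezoid := trapezoid_sub_le (m.cast_add_one_pos (α := ℝ))
    have hdiff := harmonicError_sub_succ m
    push_cast
    linarith
  have hlim : Tendsto (fun m : ℕ ↦ harmonicError m - 1 / (m + 1) ^ 2) atTop (𝓝 0) := by
    simpa [div_pow] using
      tendsto_harmonicError.sub ((tendsto_one_div_add_atTop_nhds_zero_nat (𝕜 := ℝ)).pow 2)
  simpa using hmono.ge_of_tendsto hlim m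

lemma hasSum_one_div_add_one_sq : HasSum (fun m : ℕ ↦ 1 / (m + 1 : ℝ) ^ 2) (Real.pi ^ 2 / 6) := by
  simpa using (hasSum_nat_add_iff' 1).2 hasSum_zeta_two

lemma summable_harmonicError : Summable harmonicError :=
  .of_nonneg_of_le harmonicError_nonneg harmonicError_le hasSum_one_div_add_one_sq.summable

lemma sum_harmonicError (N : ℕ) :
    ∑ m ∈ Finset.range N, harmonicError m =
      Real.log N.factorial - (N + 1 / 2) * harmonic N + N + eulerGamma * N := by
  induction N with
  | zero => simp
  | succ N ih =>
    rw [Finset.sum_range_succ, ih, harmonicError, harmonic_succ_real, Nat.factorial_succ]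
    push_cast
    rw [Real.log_mul (by positivity) (by positivity)]
    field_simp
    ring

lemma tendsto_mul_harmonicError :
    Tendsto (fun m : ℕ ↦ (m + 1 + 1 / 2 : ℝ) * harmonicError m) atTop (𝓝 0) := by
  have hlim : Tendsto (fun m : ℕ ↦ 2 * (1 / (m + 1 : ℝ))) atTop (𝓝 0) := by
    simpa using (tendsto_one_div_add_atTop_nhds_zero_nat (𝕜 := ℝ)).const_mul 2
  refine squeeze_zero (fun m ↦ mul_nonneg (by positivity) (harmonicError_nonneg m))
    (fun m ↦ ?_) hlim
  calc (m + 1 + 1 / 2 : ℝ) * harmonicError m ≤ (2 * (m + 1)) * (1 / (m + 1) ^ 2) :=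
        mul_le_mul (by linarith [m.cast_nonneg (α := ℝ)]) (harmonicError_le m)
          (harmonicError_nonneg m) (by positivity)
    _ = 2 * (1 / (m + 1 : ℝ)) := by field_simp

lemma hasSum_harmonicError :
    HasSum harmonicError (Real.log (2 * Real.pi) / 2 - eulerGamma / 2 - 1 / 2) := by
  have hstirling : Tendsto (fun m : ℕ ↦ Real.log (Stirling.stirlingSeq (m + 1))) atTop
      (𝓝 (Real.log √Real.pi)) :=
    ((tendsto_add_atTop_iff_nat 1).2 Stirling.tendsto_stirlingSeq_sqrt_pi).log (by positivity)
  have hlim := ((hstirling.add_const (Real.log 2 / 2 - eulerGamma / 2 - 1 / 2)).sub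
    ((tendsto_one_div_add_atTop_nhds_zero_nat (𝕜 := ℝ)).const_mul (1 / 4))).add
    tendsto_mul_harmonicError
  refine summable_harmonicError.hasSum_iff_tendsto_nat.2 ((tendsto_add_atTop_iff_nat 1).1 ?_)
  convert! hlim using 2 with m
  · have hharm : (harmonic (m + 1) : ℝ) =
        Real.log (m + 1) + eulerGamma + 1 / (2 * (m + 1)) - harmonicError m := by
      rw [harmonicError]
      ring
    rw [sum_harmonicError, Stirling.log_stirlingSeq_formula, hharm]
    push_cast
    rw [Real.log_mul (by norm_num) (by positivity),
      Real.log_div (by positivity) (Real.exp_ne_zero _), Real.log_exp]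
    field_simp
    ring
  · rw [Real.log_sqrt Real.pi_pos.le, Real.log_mul (by norm_num) Real.pi_ne_zero]
    ring

lemma log_add_eulerGamma_sub_harmonic (m : ℕ) :
    Real.log (m + 1) + eulerGamma - harmonic m = harmonicError m + 1 / (2 * (m + 1)) := by
  rw [harmonicError, harmonic_succ_real]
  field_simp
  ring

lemma sum_log_add_eulerGamma_sub_harmonic_div (N : ℕ) :
    ∑ m ∈ Finset.range N, (Real.log (m + 1) + eulerGamma - harmonic m) / (m + 1) =
      ∑ j ∈ Finset.Icc 1 N, Real.log j / j + eulerGamma * harmonic N -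
        ((harmonic N : ℝ) ^ 2 - ∑ m ∈ Finset.range N, 1 / (m + 1 : ℝ) ^ 2) / 2 := by
  induction N with
  | zero => simp
  | succ N ih =>
    rw [Finset.sum_range_succ, ih, Finset.sum_Icc_succ_top (by lia), Finset.sum_range_succ,
      harmonic_succ_real]
    push_cast
    field_simp
    ring

lemma tendsto_harmonic_mul_eulerGamma_sub :
    Tendsto (fun m : ℕ ↦ (harmonic (m + 1) : ℝ) *
      (eulerGamma - (harmonic (m + 1) - Real.log (m + 1)))) atTop (𝓝 0) := by
  have hlim : Tendsto (fun m : ℕ ↦ (1 + Real.log (m + 1)) / (m + 1 : ℝ)) atTop (𝓝 0) := by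
    have hlog := (tendsto_add_atTop_iff_nat 1).2
      (Real.isLittleO_log_id_atTop.tendsto_div_nhds_zero.comp tendsto_natCast_atTop_atTop)
    simpa [add_div] using (tendsto_one_div_add_atTop_nhds_zero_nat (𝕜 := ℝ)).add hlog
  refine squeeze_zero_norm (fun m ↦ ?_) hlim
  have hharm : (harmonic (m + 1) : ℝ) ≤ 1 + Real.log (m + 1) :=
    mod_cast harmonic_le_one_add_log (m + 1)
  have hpos : (0 : ℝ) < harmonic (m + 1) := mod_cast harmonic_pos m.succ_ne_zero
  have hsq : 1 / (m + 1 : ℝ) ^ 2 ≤ 1 / (m + 1) := by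
    gcongr
    exact le_self_pow₀ (by simp) two_ne_zero
  have hdiff : |eulerGamma - (harmonic (m + 1) - Real.log (m + 1))| ≤ 1 / (m + 1) := by
    have heq : eulerGamma - (harmonic (m + 1) - Real.log (m + 1)) =
        harmonicError m - 1 / (m + 1) / 2 := by
      rw [harmonicError]
      field_simp
      ring
    have hinv : (0 : ℝ) < 1 / (m + 1) := by positivity
    rw [heq, abs_le]
    constructor <;> linarith [harmonicError_nonneg m, harmonicError_le m]
  rw [norm_mul, Real.norm_of_nonneg hpos.le, Real.norm_eq_abs, div_eq_mul_one_div]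
  exact mul_le_mul hharm hdiff (abs_nonneg _) (hpos.le.trans hharm)

lemma hasSum_log_add_eulerGamma_sub_harmonic_div :
    HasSum (fun m : ℕ ↦ (Real.log (m + 1) + eulerGamma - harmonic m) / (m + 1))
      (gamma1 + eulerGamma ^ 2 / 2 + Real.pi ^ 2 / 12) := by
  have hnonneg (m : ℕ) : 0 ≤ (Real.log (m + 1) + eulerGamma - harmonic m) / (m + 1) := by
    rw [log_add_eulerGamma_sub_harmonic]
    have := harmonicError_nonneg m
    positivity
  refine (hasSum_iff_tendsto_nat_of_nonneg hnonneg _).2 ((tendsto_add_atTop_iff_nat 1).1 ?_)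
  have hgamma1 := (tendsto_add_atTop_iff_nat 1).2 tendsto_sum_log_div_sub
  have hzeta := (tendsto_add_atTop_iff_nat 1).2 hasSum_one_div_add_one_sq.tendsto_sum_nat
  have hlim := ((hgamma1.add ((tendsto_harmonic_succ_sub_log.pow 2).div_const 2)).add
    tendsto_harmonic_mul_eulerGamma_sub).add (hzeta.div_const 2)
  convert! hlim using 2 with m
  · rw [sum_log_add_eulerGamma_sub_harmonic_div]
    push_cast
    ring
  · ring

end Harmonic

section GeneratingFunctions

variable {q : ℂ}

lemma summable_norm_pow_div (hq : ‖q‖ < 1) : Summable fun n : ℕ ↦ ‖q ^ n / n‖ := by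
  refine .of_nonneg_of_le (fun _ ↦ norm_nonneg _) (fun n ↦ ?_)
    (summable_geometric_of_lt_one (norm_nonneg q) hq)
  rw [norm_div, norm_pow, Complex.norm_natCast]
  rcases n.eq_zero_or_pos with rfl | hn
  · simp
  · exact div_le_self (by positivity) (mod_cast hn)

lemma hasSum_harmonic_mul_pow (hq : ‖q‖ < 1) :
    HasSum (fun n : ℕ ↦ (harmonic n : ℂ) * q ^ n) (-Complex.log (1 - q) / (1 - q)) := by
  have h := hasSum_sum_range_mul_of_summable_norm (summable_norm_pow_div hq)
    (summable_norm_geometric_of_norm_lt_one hq)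
  rw [(Complex.hasSum_taylorSeries_neg_log hq).tsum_eq, tsum_geometric_of_norm_lt_one hq,
    ← div_eq_mul_inv] at h
  refine h.congr_fun fun n ↦ ?_
  rw [Finset.sum_range_succ', harmonic]
  push_cast
  rw [Finset.sum_mul]
  simp only [div_zero, zero_mul, add_zero]
  refine Finset.sum_congr rfl fun k hk ↦ ?_
  rw [div_mul_eq_mul_div, ← pow_add, Nat.add_sub_of_le (Finset.mem_range.1 hk), div_eq_inv_mul]

lemma sum_range_one_div_mul_one_div (n : ℕ) :
    ∑ k ∈ Finset.range n, (1 / (k + 1 : ℂ)) * (1 / ((n - k : ℕ) : ℂ)) =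
      2 * harmonic n / (n + 1) := by
  have hharm : (harmonic n : ℂ) = ∑ k ∈ Finset.range n, 1 / (k + 1 : ℂ) := by
    simp [harmonic]
  have hreflect : ∑ k ∈ Finset.range n, 1 / (k + 1 : ℂ) =
      ∑ k ∈ Finset.range n, 1 / ((n - k : ℕ) : ℂ) := by
    rw [← Finset.sum_range_reflect]
    refine Finset.sum_congr rfl fun k hk ↦ ?_
    have hk := Finset.mem_range.1 hk
    rw [← Nat.cast_succ]
    congr 3
    lia
  rw [two_mul, hharm]
  nth_rw 2 [hreflect]
  rw [← Finset.sum_add_distrib, Finset.sum_div]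
  refine Finset.sum_congr rfl fun k hk ↦ ?_
  have hk := Finset.mem_range.1 hk
  have hne : ((n - k : ℕ) : ℂ) ≠ 0 := by
    rw [Nat.cast_ne_zero]
    lia
  have hn : (n + 1 : ℂ) = (k + 1) + (n - k : ℕ) := by
    rw [Nat.cast_sub hk.le]
    ring
  rw [hn]
  have hk1 : (k + 1 : ℂ) ≠ 0 := k.cast_add_one_ne_zero
  have hn1 : (k + 1 : ℂ) + (n - k : ℕ) ≠ 0 := hn ▸ n.cast_add_one_ne_zero
  field_simp
  ring

lemma hasSum_harmonic_div_mul_pow (hq : ‖q‖ < 1) :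
    HasSum (fun n : ℕ ↦ (harmonic n / (n + 1) : ℂ) * q ^ (n + 1))
      (Complex.log (1 - q) ^ 2 / 2) := by
  have h := hasSum_sum_range_mul_of_summable_norm (summable_norm_pow_div hq)
    (summable_norm_pow_div hq)
  rw [(Complex.hasSum_taylorSeries_neg_log hq).tsum_eq, neg_mul_neg, ← sq] at h
  have h' := ((hasSum_nat_add_iff' 1).2 h).div_const 2
  simp only [Finset.sum_range_one, zero_add, Nat.cast_zero, div_zero, zero_mul, sub_zero] at h'
  refine h'.congr_fun fun n ↦ ?_
  have hterm : ∑ k ∈ Finset.range n, q ^ (k + 1) / ((k + 1 : ℕ) : ℂ) *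
        (q ^ (n + 1 - (k + 1)) / ((n + 1 - (k + 1) : ℕ) : ℂ)) =
      2 * harmonic n / (n + 1) * q ^ (n + 1) := by
    rw [← sum_range_one_div_mul_one_div, Finset.sum_mul]
    refine Finset.sum_congr rfl fun k hk ↦ ?_
    have hk := Finset.mem_range.1 hk
    rw [div_mul_div_comm, ← pow_add, Nat.add_sub_of_le (by lia), Nat.add_sub_add_right]
    push_cast
    rw [one_div_mul_one_div, div_mul_eq_mul_div, one_mul]
  rw [Finset.sum_range_succ, Finset.sum_range_succ', hterm]
  simp only [Nat.sub_self, Nat.cast_zero, div_zero, zero_mul, mul_zero, add_zero]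
  ring

end GeneratingFunctions

section AbelLimit

variable {c : ℕ → ℂ}

lemma exp_neg_mul_add_one (w : ℂ) (m : ℕ) :
    Complex.exp (-(w * (m + 1))) = Complex.exp (-w) ^ (m + 1) := by
  rw [← Complex.exp_nat_mul]
  push_cast
  ring_nf

lemma tendsto_expSeries (hc : Summable c) :
    Tendsto (expSeries c) (𝓝[{w | 0 < w.re}] 0) (𝓝 (∑' m, c m)) := by
  refine tendsto_tsum_of_dominated_convergence hc.norm (fun m ↦ ?_) ?_
  · have hcont : Continuous fun w : ℂ ↦ c m * Complex.exp (-(w * (m + 1))) := by fun_prop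
    simpa using (hcont.tendsto 0).mono_left nhdsWithin_le_nhds
  · filter_upwards [self_mem_nhdsWithin] with w hw m
    have hexp : -(w.re * (m + 1)) ≤ 0 :=
      neg_nonpos.2 (mul_nonneg (le_of_lt hw) m.cast_add_one_pos.le)
    rw [norm_mul_exp_neg_mul_add_one]
    exact mul_le_of_le_one_right (norm_nonneg _) (Real.exp_le_one_iff.2 hexp)

end AbelLimit

section OneSubExpNeg

lemma isBigO_exp_neg_sub_quadratic :
    (fun w : ℂ ↦ Complex.exp (-w) - (1 - w + w ^ 2 / 2)) =O[𝓝 0] fun w ↦ w ^ 3 := by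
  have h := (Complex.exp_sub_sum_range_isBigO_pow 3).comp_tendsto
    (show Tendsto (fun w : ℂ ↦ -w) (𝓝 0) (𝓝 0) by simpa using (continuous_neg (G := ℂ)).tendsto 0)
  refine ((h.congr_left fun w ↦ ?_).trans ?_)
  · simp only [Function.comp_apply, Finset.sum_range_succ, Finset.sum_range_zero]
    norm_num
    ring
  · refine .of_bound 1 (Eventually.of_forall fun w ↦ ?_)
    simp

lemma tendsto_one_sub_exp_neg_div_sub_one_div :
    Tendsto (fun w : ℂ ↦ ((1 - Complex.exp (-w)) / w - 1) / w) (𝓝[≠] 0) (𝓝 (-(1 / 2))) := by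
  have h : (fun w : ℂ ↦ Complex.exp (-w) - (1 - w + w ^ 2 / 2)) =o[𝓝[≠] 0] fun w ↦ w ^ 2 :=
    (isBigO_exp_neg_sub_quadratic.trans_isLittleO
      (Asymptotics.isLittleO_pow_pow (by norm_num))).mono nhdsWithin_le_nhds
  have hlim := h.tendsto_div_nhds_zero.const_sub (-(1 / 2))
  rw [sub_zero] at hlim
  refine hlim.congr' ?_
  filter_upwards [self_mem_nhdsWithin] with w hw
  have hw : w ≠ 0 := hw
  field_simp
  ring

lemma isBigO_one_sub_exp_neg_div_sub_one :
    (fun w : ℂ ↦ (1 - Complex.exp (-w)) / w - 1) =O[𝓝[≠] 0] fun w ↦ w :=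
  Asymptotics.isBigO_of_div_tendsto_nhds
    (by filter_upwards [self_mem_nhdsWithin] with w hw h using absurd h hw) _
    tendsto_one_sub_exp_neg_div_sub_one_div

lemma tendsto_one_sub_exp_neg_div :
    Tendsto (fun w : ℂ ↦ (1 - Complex.exp (-w)) / w) (𝓝[≠] 0) (𝓝 1) := by
  have h := isBigO_one_sub_exp_neg_div_sub_one.trans_tendsto
    (tendsto_nhdsWithin_of_tendsto_nhds tendsto_id)
  simpa using h.add_const 1

lemma tendsto_log_one_sub_exp_neg_div_div :
    Tendsto (fun w : ℂ ↦ Complex.log ((1 - Complex.exp (-w)) / w) / w) (𝓝[≠] 0)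
      (𝓝 (-(1 / 2))) := by
  have hlog := ((Complex.hasDerivAt_log Complex.one_mem_slitPlane).isLittleO.comp_tendsto
    tendsto_one_sub_exp_neg_div).trans_isBigO isBigO_one_sub_exp_neg_div_sub_one
  have hlim := hlog.tendsto_div_nhds_zero.add tendsto_one_sub_exp_neg_div_sub_one_div
  rw [zero_add] at hlim
  refine hlim.congr fun w ↦ ?_
  simp only [Function.comp_apply, Complex.log_one, smul_eq_mul, inv_one, mul_one]
  ring

lemma isBigO_one_div_one_sub_exp_neg_sub :
    (fun w : ℂ ↦ 1 / (1 - Complex.exp (-w)) - 1 / 2 - 1 / w) =O[𝓝[≠] 0] fun w ↦ w := by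
  let ε : ℂ → ℂ := fun w ↦ Complex.exp (-w) - (1 - w + w ^ 2 / 2)
  have hε : (fun w ↦ (w / 2 + 1) * ε w) =O[𝓝 0] fun w ↦ w ^ 3 := by
    have hcont : Continuous fun w : ℂ ↦ w / 2 + 1 := by fun_prop
    simpa using (hcont.tendsto 0).isBigO_one ℂ |>.mul isBigO_exp_neg_sub_quadratic
  have hnum : (fun w ↦ 1 / 4 * w ^ 3 + (w / 2 + 1) * ε w) =O[𝓝[≠] 0] fun w ↦ w ^ 3 :=
    ((Asymptotics.isBigO_const_mul_self _ _ _).add hε).mono nhdsWithin_le_nhds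
  have hinv := (tendsto_one_sub_exp_neg_div.inv₀ one_ne_zero).isBigO_one ℂ
  refine ((hnum.mul hinv).mul (Asymptotics.isBigO_refl (fun w ↦ (w ^ 2)⁻¹) _)).congr' ?_ ?_
  · filter_upwards [self_mem_nhdsWithin,
      tendsto_one_sub_exp_neg_div.eventually_ne one_ne_zero] with w hw hne
    have hw : w ≠ 0 := hw
    have hne : 1 - Complex.exp (-w) ≠ 0 := fun h ↦ hne (by rw [h, zero_div])
    simp only [ε]
    field_simp
    ring
  · filter_upwards [self_mem_nhdsWithin] with w hw
    have hw : w ≠ 0 := hw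
    field_simp

lemma tendsto_mul_log_nhds_zero :
    Tendsto (fun w : ℂ ↦ w * Complex.log w) (𝓝 0) (𝓝 0) := by
  have hlim : Tendsto (fun w : ℂ ↦ |‖w‖ * Real.log ‖w‖| + ‖w‖ * Real.pi) (𝓝 0) (𝓝 0) := by
    have hcont : Continuous fun w : ℂ ↦ |‖w‖ * Real.log ‖w‖| + ‖w‖ * Real.pi :=
      (Real.continuous_mul_log.comp continuous_norm).abs.add (continuous_norm.mul_const _)
    simpa using hcont.tendsto 0
  refine squeeze_zero_norm (fun w ↦ ?_) hlim
  rw [norm_mul, abs_mul, abs_norm, ← mul_add]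
  gcongr
  exact norm_log_le_abs_log_norm_add_pi w

end OneSubExpNeg

section LogSeries

/-- The coefficients `γ + b + log (m + 1)` of the logarithmic Lambert series, where `b` stands for
`log y`. -/
noncomputable def logCoeff (b : ℂ) (m : ℕ) : ℂ := eulerGamma + b + Real.log (m + 1)

lemma isBigO_logCoeff (b : ℂ) : logCoeff b =O[atTop] fun m : ℕ ↦ (m : ℝ) ^ 1 := by
  have hlog : (fun m : ℕ ↦ (Real.log (m + 1) : ℂ)) =O[atTop] fun m : ℕ ↦ (m : ℝ) ^ 1 := by
    refine .of_bound 1 (Eventually.of_forall fun m ↦ ?_)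
    have hm : (0 : ℝ) ≤ m := m.cast_nonneg
    rw [Complex.norm_real, Real.norm_of_nonneg (Real.log_nonneg (by linarith)), pow_one,
      Real.norm_of_nonneg hm, one_mul]
    linarith [Real.log_le_sub_one_of_pos (show (0 : ℝ) < m + 1 by linarith)]
  have hconst : (fun _ : ℕ ↦ (eulerGamma + b : ℂ)) =O[atTop] fun m : ℕ ↦ (m : ℝ) ^ 1 := by
    simp only [pow_one]
    exact ((Asymptotics.isLittleO_const_id_atTop _).comp_tendsto tendsto_natCast_atTop_atTop).isBigO
  exact hconst.add hlog

lemma isBigO_logCoeff_div (b : ℂ) :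
    (fun m : ℕ ↦ logCoeff b m / (m + 1)) =O[atTop] fun m : ℕ ↦ (m : ℝ) ^ 1 := by
  refine (Asymptotics.IsBigO.of_bound' (Eventually.of_forall fun m ↦ ?_)).trans
    (isBigO_logCoeff b)
  rw [norm_div, ← Nat.cast_succ, Complex.norm_natCast]
  exact div_le_self (norm_nonneg _) (mod_cast m.succ_pos)

lemma hasSum_expSeries_of_summable {c : ℕ → ℂ} (hc : Summable c) {w : ℂ} (hw : 0 < w.re) :
    HasSum (fun m : ℕ ↦ c m * Complex.exp (-w) ^ (m + 1)) (expSeries c w) := by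
  have hbounded : c =O[atTop] fun m : ℕ ↦ (m : ℝ) ^ 0 := by
    simpa only [pow_zero] using hc.tendsto_atTop_zero.isBigO_one ℝ
  refine (summable_expSeries hbounded hw).hasSum.congr_fun fun m ↦ ?_
  rw [exp_neg_mul_add_one]

lemma expSeries_logCoeff (b : ℂ) {w : ℂ} (hw : 0 < w.re) :
    expSeries (logCoeff b) w = expSeries (fun m ↦ harmonicError m) w +
      (1 / 2 - 1 / (1 - Complex.exp (-w))) * Complex.log (1 - Complex.exp (-w)) +
      b / (Complex.exp w - 1) := by
  have hq := norm_exp_neg_lt_one hw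
  have herror := hasSum_expSeries_of_summable (Complex.summable_ofReal.2 summable_harmonicError) hw
  have hharm := (hasSum_nat_add_iff' 1).2 (hasSum_harmonic_mul_pow hq)
  have hlog := (Complex.hasSum_taylorSeries_neg_log' hq).div_const 2
  have hgeom := (hasSum_exp_neg_add_one_mul hw).mul_left b
  have hsum := ((herror.add hharm).sub hlog).add hgeom
  refine (hsum.congr_fun fun m ↦ ?_).tsum_eq.trans ?_
  · rw [mul_comm (m + 1 : ℂ) w, exp_neg_mul_add_one, logCoeff, harmonicError]
    have hm : (m + 1 : ℂ) ≠ 0 := m.cast_add_one_ne_zero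
    push_cast
    field_simp
    ring
  · simp only [Finset.sum_range_one, harmonic_zero, Rat.cast_zero, zero_mul]
    ring

lemma expSeries_logCoeff_div (b : ℂ) {w : ℂ} (hw : 0 < w.re) :
    expSeries (fun m ↦ logCoeff b m / (m + 1)) w =
      expSeries (fun m ↦ ((Real.log (m + 1) + eulerGamma - harmonic m) / (m + 1) : ℝ)) w +
      Complex.log (1 - Complex.exp (-w)) ^ 2 / 2 - b * Complex.log (1 - Complex.exp (-w)) := by
  have hq := norm_exp_neg_lt_one hw
  have herror := hasSum_expSeries_of_summable
    (Complex.summable_ofReal.2 hasSum_log_add_eulerGamma_sub_harmonic_div.summable) hw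
  have hlog := (Complex.hasSum_taylorSeries_neg_log' hq).mul_left b
  have hsum := (herror.add (hasSum_harmonic_div_mul_pow hq)).add hlog
  refine (hsum.congr_fun fun m ↦ ?_).tsum_eq.trans ?_
  · simp only [exp_neg_mul_add_one, logCoeff]
    push_cast
    ring
  · ring

lemma log_one_sub_exp_neg {w : ℂ} (hw : 0 < w.re) :
    Complex.log (1 - Complex.exp (-w)) =
      Complex.log w + Complex.log ((1 - Complex.exp (-w)) / w) := by
  have hre : 0 < (1 - Complex.exp (-w)).re :=
    sub_pos.2 ((Complex.re_le_norm _).trans_lt (norm_exp_neg_lt_one hw))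
  rw [log_div_of_re_pos hre hw]
  ring

lemma nhdsWithin_re_pos_le : 𝓝[{w : ℂ | 0 < w.re}] 0 ≤ 𝓝[≠] 0 :=
  nhdsWithin_mono _ fun _ hw ↦ Complex.ne_zero_of_re_pos hw

lemma one_div_exp_sub_one {w : ℂ} (hw : 0 < w.re) :
    1 / (Complex.exp w - 1) = 1 / (1 - Complex.exp (-w)) - 1 := by
  have hne : 1 - Complex.exp (-w) ≠ 0 := fun h ↦ by
    simpa [← sub_eq_zero.1 h] using norm_exp_neg_lt_one hw
  rw [exp_sub_one, one_div, mul_inv, ← Complex.exp_neg]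
  field_simp
  ring

lemma tendsto_expSeries_logCoeff (b : ℂ) :
    Tendsto (fun w ↦ expSeries (logCoeff b) w + logDiv w - b / w) (𝓝[{w | 0 < w.re}] 0)
      (𝓝 (Real.log (2 * Real.pi) / 2 - eulerGamma / 2 - b / 2)) := by
  let κ : ℂ → ℂ := fun w ↦ 1 / (1 - Complex.exp (-w)) - 1 / 2 - 1 / w
  have hid : Tendsto (fun w : ℂ ↦ w) (𝓝[{w : ℂ | 0 < w.re}] 0) (𝓝 0) :=
    tendsto_nhdsWithin_of_tendsto_nhds tendsto_id
  have hκO : κ =O[𝓝[{w : ℂ | 0 < w.re}] 0] fun w ↦ w :=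
    isBigO_one_div_one_sub_exp_neg_sub.mono nhdsWithin_re_pos_le
  have hκ : Tendsto κ (𝓝[{w : ℂ | 0 < w.re}] 0) (𝓝 0) := hκO.trans_tendsto hid
  have hκlog : Tendsto (fun w ↦ κ w * Complex.log w) (𝓝[{w : ℂ | 0 < w.re}] 0) (𝓝 0) :=
    (hκO.mul (Asymptotics.isBigO_refl _ _)).trans_tendsto
      (tendsto_mul_log_nhds_zero.mono_left nhdsWithin_le_nhds)
  have hratio := tendsto_log_one_sub_exp_neg_div_div.mono_left nhdsWithin_re_pos_le
  have herror := tendsto_expSeries (Complex.summable_ofReal.2 summable_harmonicError)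
  rw [← Complex.ofReal_tsum, hasSum_harmonicError.tsum_eq] at herror
  have hlim := ((herror.sub hκlog).sub (((hκ.mul hid).add_const 1).mul hratio)).add
    ((hκ.sub_const (1 / 2)).const_mul b)
  refine (hlim.congr' ?_).trans_eq (congrArg 𝓝 ?_)
  · filter_upwards [self_mem_nhdsWithin] with w hw
    have hw₀ := Complex.ne_zero_of_re_pos hw
    rw [expSeries_logCoeff b hw, log_one_sub_exp_neg hw, div_eq_mul_one_div b (_ - _),
      one_div_exp_sub_one hw, logDiv]
    simp only [κ]
    field_simp
    ring
  · push_cast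
    ring

lemma tendsto_expSeries_logCoeff_div (b : ℂ) :
    Tendsto (fun w ↦ Complex.log w ^ 2 / 2 - b * Complex.log w -
        expSeries (fun m ↦ logCoeff b m / (m + 1)) w) (𝓝[{w | 0 < w.re}] 0)
      (𝓝 (-(gamma1 + (eulerGamma : ℂ) ^ 2 / 2 + (Real.pi : ℂ) ^ 2 / 12))) := by
  have hid : Tendsto (fun w : ℂ ↦ w) (𝓝[{w : ℂ | 0 < w.re}] 0) (𝓝 0) :=
    tendsto_nhdsWithin_of_tendsto_nhds tendsto_id
  have hratio := tendsto_log_one_sub_exp_neg_div_div.mono_left nhdsWithin_re_pos_le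
  have hlog := tendsto_mul_log_nhds_zero.mono_left
    (nhdsWithin_le_nhds (s := {w : ℂ | 0 < w.re}))
  have herror := tendsto_expSeries
    (Complex.summable_ofReal.2 hasSum_log_add_eulerGamma_sub_harmonic_div.summable)
  rw [← Complex.ofReal_tsum, hasSum_log_add_eulerGamma_sub_harmonic_div.tsum_eq] at herror
  have hcorr := hratio.mul hid
  have hlim := ((herror.neg.sub (hratio.mul hlog)).sub ((hcorr.pow 2).div_const 2)).add
    (hcorr.const_mul b)
  refine (hlim.congr' ?_).trans_eq (congrArg 𝓝 ?_)
  · filter_upwards [self_mem_nhdsWithin] with w hw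
    have hw₀ := Complex.ne_zero_of_re_pos hw
    rw [expSeries_logCoeff_div b hw, log_one_sub_exp_neg hw]
    field_simp
    ring
  · push_cast
    ring

end LogSeries

section LambertSeries

lemma hasDerivAt_expSeries_ofReal_mul {c : ℕ → ℂ} {k : ℕ}
    (hc : c =O[atTop] fun m : ℕ ↦ (m : ℝ) ^ k) {y : ℂ} (hy : 0 < y.re) {s : ℝ} (hs : 0 < s) :
    HasDerivAt (fun s : ℝ ↦ expSeries c (s * y))
      (-(y * expSeries (fun m ↦ (m + 1) * c m) (s * y))) s := by
  have hre : 0 < ((s : ℂ) * y).re := by simpa using mul_pos hs hy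
  have hlin : HasDerivAt (fun s : ℝ ↦ (s : ℂ) * y) y s := by
    simpa using (Complex.ofRealCLM.hasDerivAt (x := s)).mul_const y
  refine ((hasDerivAt_expSeries hc hre).comp s hlin).congr_deriv ?_
  ring

/-- The summand to which the Euler–Maclaurin formula is applied: its values at the positive integers
add up to the Lambert series, up to the divergent series `∑ log n / n`. -/
noncomputable def lambertSummand (y : ℂ) (s : ℝ) : ℂ :=
  logDiv s + y * expSeries (logCoeff (Complex.log y)) (s * y)

/-- The derivative of `lambertSummand`. -/
noncomputable def lambertSummandDeriv (y : ℂ) (s : ℝ) : ℂ :=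
  logDivDeriv s - y ^ 2 * expSeries (fun m ↦ (m + 1) * logCoeff (Complex.log y) m) (s * y)

/-- A primitive of `lambertSummand`. -/
noncomputable def lambertSummandPrimitive (y : ℂ) (s : ℝ) : ℂ :=
  Complex.log s ^ 2 / 2 - expSeries (fun m ↦ logCoeff (Complex.log y) m / (m + 1)) (s * y)

variable {y : ℂ} {s : ℝ}

lemma hasDerivAt_lambertSummandPrimitive (hy : 0 < y.re) (hs : 0 < s) :
    HasDerivAt (lambertSummandPrimitive y) (lambertSummand y s) s := by
  have hlog := (hasDerivAt_half_log_sq (Complex.ofReal_mem_slitPlane.2 hs)).comp_ofReal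
  have hseries := hasDerivAt_expSeries_ofReal_mul (isBigO_logCoeff_div (Complex.log y)) hy hs
  refine (hlog.sub hseries).congr_deriv ?_
  have hcoeff (m : ℕ) : (m + 1 : ℂ) * (logCoeff (Complex.log y) m / (m + 1)) =
      logCoeff (Complex.log y) m := mul_div_cancel₀ _ m.cast_add_one_ne_zero
  simp only [hcoeff, lambertSummand, sub_neg_eq_add]

lemma hasDerivAt_lambertSummand (hy : 0 < y.re) (hs : 0 < s) :
    HasDerivAt (lambertSummand y) (lambertSummandDeriv y s) s := by
  have hlog := (hasDerivAt_logDiv (Complex.ofReal_mem_slitPlane.2 hs)).comp_ofReal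
  have hseries := hasDerivAt_expSeries_ofReal_mul (isBigO_logCoeff (Complex.log y)) hy hs
  refine (hlog.add (hseries.const_mul y)).congr_deriv ?_
  rw [lambertSummandDeriv]
  ring

-- Poisson summation absorbs the singular part of the second derivative at `0`.
lemma hasDerivAt_lambertSummandDeriv (hy : 0 < y.re) (hs : 0 < s) :
    HasDerivAt (lambertSummandDeriv y) (dualKernelSum y s) s := by
  have hlog := (hasDerivAt_logDivDeriv (Complex.ofReal_mem_slitPlane.2 hs)).comp_ofReal
  have hseries := hasDerivAt_expSeries_ofReal_mul
    (isBigO_add_one_mul (isBigO_logCoeff (Complex.log y))) hy hs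
  refine (hlog.sub (hseries.const_mul (y ^ 2))).congr_deriv ?_
  have hpoisson := tsum_logDivKernel_add_dualPoint hy hs
  rw [tsum_logDivKernel_add_dualPoint_eq_add_dualKernelSum hy hs.le] at hpoisson
  have hcoeff : expSeries (fun m ↦ (m + 1) * ((m + 1) * logCoeff (Complex.log y) m)) (s * y) =
      ∑' m : ℕ, (m + 1 : ℂ) ^ 2 * (eulerGamma + Complex.log y + Real.log (m + 1)) *
        Complex.exp (-(s * y * (m + 1))) := by
    refine tsum_congr fun m ↦ ?_
    simp only [logCoeff]
    ring
  rw [hcoeff]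
  linear_combination -hpoisson

lemma tendsto_smul_zero_of_norm_deriv_le {E : Type*} [NormedAddCommGroup E] [NormedSpace ℝ E]
    {g g' : ℝ → E} {A : ℝ} (hg : ∀ x, 0 < x → HasDerivAt g (g' x) x)
    (hA : ∀ x, 0 < x → ‖g' x‖ ≤ A) :
    Tendsto (fun x : ℝ ↦ x • g x) (𝓝[>] 0) (𝓝 0) := by
  have hbound (x : ℝ) (hx : 0 < x) : ‖g x‖ ≤ A * |x - 1| + ‖g 1‖ := by
    have h := (convex_Ioi (0 : ℝ)).norm_image_sub_le_of_norm_hasDerivWithin_le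
      (fun z hz ↦ (hg z hz).hasDerivWithinAt) hA (Set.mem_Ioi.2 one_pos) hx
    rw [Real.norm_eq_abs] at h
    linarith [norm_le_norm_sub_add (g x) (g 1)]
  have hlim : Tendsto (fun x : ℝ ↦ x * (A * |x - 1| + ‖g 1‖)) (𝓝[>] 0) (𝓝 0) := by
    have hcont : Continuous fun x : ℝ ↦ x * (A * |x - 1| + ‖g 1‖) := by fun_prop
    simpa using (hcont.tendsto 0).mono_left nhdsWithin_le_nhds
  refine squeeze_zero_norm' ?_ hlim
  filter_upwards [self_mem_nhdsWithin] with x hx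
  rw [norm_smul, Real.norm_of_nonneg (le_of_lt hx)]
  exact mul_le_mul_of_nonneg_left (hbound x hx) (le_of_lt hx)

lemma tendsto_smul_lambertSummandDeriv (hy : 0 < y.re) :
    Tendsto (fun x : ℝ ↦ x • lambertSummandDeriv y x) (𝓝[>] 0) (𝓝 0) := by
  obtain ⟨A, hA, hbound⟩ := exists_norm_dualKernelSum_le hy
  refine tendsto_smul_zero_of_norm_deriv_le (A := A) (fun x ↦ hasDerivAt_lambertSummandDeriv hy)
    fun x hx ↦ (hbound x hx.le).trans ?_
  exact mul_le_of_le_one_right hA.le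
    (Real.rpow_le_one_of_one_le_of_nonpos (by linarith) (by norm_num))

lemma tendsto_ofReal_mul_nhdsWithin (hy : 0 < y.re) :
    Tendsto (fun s : ℝ ↦ (s : ℂ) * y) (𝓝[>] 0) (𝓝[{w | 0 < w.re}] 0) := by
  have hcont : Continuous fun s : ℝ ↦ (s : ℂ) * y := by fun_prop
  refine tendsto_nhdsWithin_iff.2
    ⟨by simpa using (hcont.tendsto 0).mono_left nhdsWithin_le_nhds, ?_⟩
  filter_upwards [self_mem_nhdsWithin] with s hs
  simpa using mul_pos hs hy

lemma tendsto_lambertSummand (hy : 0 < y.re) :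
    Tendsto (lambertSummand y) (𝓝[>] 0)
      (𝓝 (y * (Real.log (2 * Real.pi) / 2 - eulerGamma / 2 - Complex.log y / 2))) := by
  refine (((tendsto_expSeries_logCoeff (Complex.log y)).comp
    (tendsto_ofReal_mul_nhdsWithin hy)).const_mul y).congr' ?_
  filter_upwards [self_mem_nhdsWithin] with s hs
  have hs : 0 < s := hs
  have hy₀ := Complex.ne_zero_of_re_pos hy
  have hs₀ : (s : ℂ) ≠ 0 := Complex.ofReal_ne_zero.2 hs.ne'
  rw [lambertSummand, Function.comp_apply, logDiv, logDiv, Complex.log_ofReal_mul hs hy₀,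
    Complex.ofReal_log hs.le]
  field_simp
  ring

lemma tendsto_lambertSummandPrimitive (hy : 0 < y.re) :
    Tendsto (lambertSummandPrimitive y) (𝓝[>] 0)
      (𝓝 (Complex.log y ^ 2 / 2 -
        (gamma1 + (eulerGamma : ℂ) ^ 2 / 2 + (Real.pi : ℂ) ^ 2 / 12))) := by
  have hlim := ((tendsto_expSeries_logCoeff_div (Complex.log y)).comp
    (tendsto_ofReal_mul_nhdsWithin hy)).add_const (Complex.log y ^ 2 / 2)
  rw [neg_add_eq_sub] at hlim
  refine hlim.congr' ?_
  filter_upwards [self_mem_nhdsWithin] with s hs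
  have hs : 0 < s := hs
  rw [lambertSummandPrimitive, Function.comp_apply,
    Complex.log_ofReal_mul hs (Complex.ne_zero_of_re_pos hy), Complex.ofReal_log hs.le]
  ring

lemma tendsto_lambertSummand_natCast (hy : 0 < y.re) :
    Tendsto (fun N : ℕ ↦ lambertSummand y N) atTop (𝓝 0) := by
  have hlim := tendsto_logDiv_natCast.add
    ((tendsto_expSeries_natCast_mul (isBigO_logCoeff (Complex.log y)) hy).const_mul y)
  simpa only [mul_zero, add_zero, lambertSummand, Complex.ofReal_natCast] using hlim

lemma tendsto_sum_lambertSummand_sub (hy : 0 < y.re) :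
    Tendsto (fun N : ℕ ↦ ∑ k ∈ Finset.range N, lambertSummand y (k + 1) -
        lambertSummandPrimitive y N) atTop
      (𝓝 (gamma1 +
        y * ∑' m : ℕ, logCoeff (Complex.log y) m / (Complex.exp ((m + 1) * y) - 1))) := by
  have hlambert := (hasSum_expSeries_add_one_mul (isBigO_logCoeff (Complex.log y)) hy).mul_left y
  have hlim := (tendsto_sum_logDiv_sub.add hlambert.tendsto_sum_nat).add
    (tendsto_expSeries_natCast_mul (isBigO_logCoeff_div (Complex.log y)) hy)
  rw [add_zero] at hlim
  refine hlim.congr fun N ↦ ?_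
  simp only [lambertSummand, lambertSummandPrimitive, Finset.sum_add_distrib]
  push_cast
  ring

theorem integral_emKernel_smul_dualKernelSum (hy : 0 < y.re) :
    ∫ s in Set.Ioi (0 : ℝ), emKernel s • dualKernelSum y s =
      y * (∑' m : ℕ, logCoeff (Complex.log y) m / (Complex.exp ((m + 1) * y) - 1)) +
        y * (Real.log (2 * Real.pi) - eulerGamma - Complex.log y) / 4 +
        Complex.log y ^ 2 / 2 - (eulerGamma : ℂ) ^ 2 / 2 - (Real.pi : ℂ) ^ 2 / 12 := by
  have hem := tendsto_sum_sub_primitive (fun _ ↦ hasDerivAt_lambertSummandPrimitive hy)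
    (fun _ ↦ hasDerivAt_lambertSummand hy) (fun _ ↦ hasDerivAt_lambertSummandDeriv hy)
    (tendsto_lambertSummandPrimitive hy) (tendsto_lambertSummand hy)
    (tendsto_smul_lambertSummandDeriv hy)
    (integrableOn_emKernel_smul (integrableOn_dualKernelSum hy))
    (tendsto_lambertSummand_natCast hy)
  have heq := tendsto_nhds_unique hem (tendsto_sum_lambertSummand_sub hy)
  rw [Complex.real_smul] at heq
  push_cast at heq
  linear_combination heq

end LambertSeries

theorem stmt1 (y : ℂ) (hy : 0 < y.re) :
    Summable (psiTerm y) ∧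
    y * (∑' n : ℕ, ((eulerGamma : ℂ) + Complex.log (((n : ℂ) + 1) * y))
          / (Complex.exp (((n : ℂ) + 1) * y) - 1))
      - (1/4) * y * Complex.log y
      + y * ((1/4) * Complex.log (2 * (Real.pi : ℂ)) - (eulerGamma : ℂ) / 4)
      + (1/2) * (Complex.log y) ^ 2 - (eulerGamma : ℂ) ^ 2 / 2 - (Real.pi : ℂ) ^ 2 / 12
      = ∑' n : ℕ, psiTerm y n := by
  have hsum := hasSum_psiTerm hy
  refine ⟨hsum.summable, ?_⟩
  have hcoeff (n : ℕ) : (eulerGamma : ℂ) + Complex.log ((n + 1) * y) =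
      logCoeff (Complex.log y) n := by
    have hlog := Complex.log_ofReal_mul n.cast_add_one_pos (Complex.ne_zero_of_re_pos hy)
    push_cast at hlog
    rw [hlog, logCoeff]
    ring
  have hlog_two_pi : Complex.log (2 * Real.pi) = Real.log (2 * Real.pi) := by
    rw [Complex.ofReal_log (by positivity)]
    push_cast
    rfl
  rw [hsum.tsum_eq, integral_emKernel_smul_dualKernelSum hy, hlog_two_pi]
  simp only [hcoeff]
  ring
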